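/- Let (X,f) be a TDS with f positively expansive, and φ, ψ ∈ C(X,ℝ) with ψ > 0. Then the set M_{ψ,φ}(X,f) of equilibrium measures for ψ and φ (i.e., invariant μ with (h_μ(f) + ∫φ dμ)/∫ψ dμ = P_ψ(φ)) is non-empty and compact in the weak-* topology. -/

import Mathlib

open MeasureTheory Filter Topology Set

variable {X : Type*}

/-- Birkhoff sum `S_n φ (x) = ∑_{i<n} φ(f^i x)`. -/
noncomputable def birkhoff (f : X → X) (φ : X → ℝ) (n : ℕ) (x : X) : ℝ :=
  ∑ i ∈ Finset.range n, φ (f^[i] x)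

/-- The `n`-th Bowen metric. -/
noncomputable def dynDist [MetricSpace X] (f : X → X) (n : ℕ) (x y : X) : ℝ :=
  ⨆ i : Fin n, dist (f^[(i : ℕ)] x) (f^[(i : ℕ)] y)

/-- `F` is an `(n,ε)`-spanning set of `Z`. -/
def IsSpanningSet [MetricSpace X] (f : X → X) (n : ℕ) (ε : ℝ) (Z : Set X) (F : Finset X) : Prop :=
  ∀ y ∈ Z, ∃ x ∈ F, dynDist f n x y ≤ ε

/-- `E` is `(n,ε)`-separated. -/
def IsSeparatedSet [MetricSpace X] (f : X → X) (n : ℕ) (ε : ℝ) (E : Finset X) : Prop :=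
  ∀ x ∈ E, ∀ y ∈ E, x ≠ y → ε < dynDist f n x y

/-- `S_T = {n : ∃ x, S_n ψ(x) ≤ T < S_{n+1} ψ(x)}`. -/
def STset (f : X → X) (ψ : X → ℝ) (T : ℝ) : Set ℕ :=
  {n | ∃ x : X, birkhoff f ψ n x ≤ T ∧ T < birkhoff f ψ (n + 1) x}

/-- `X_n = {x : S_n ψ(x) ≤ T < S_{n+1} ψ(x)}`. -/
def Xset (f : X → X) (ψ : X → ℝ) (T : ℝ) (n : ℕ) : Set X :=
  {x | birkhoff f ψ n x ≤ T ∧ T < birkhoff f ψ (n + 1) x}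

/-- `Q_{ψ,T}(f,φ,ε)`, the spanning-set quantity. -/
noncomputable def Qspan [MetricSpace X] (f : X → X) (φ ψ : X → ℝ) (T ε : ℝ) : ℝ :=
  sInf { r : ℝ | ∃ F : ℕ → Finset X,
    (∀ n ∈ STset f ψ T, IsSpanningSet f n ε (Xset f ψ T n) (F n)) ∧
    r = ∑' n : ℕ, Set.indicator (STset f ψ T)
        (fun n => ∑ x ∈ F n, Real.exp (birkhoff f φ n x)) n }

/-- `P_{ψ,T}(f,φ,ε)`, the separated-set quantity. -/
noncomputable def Psep [MetricSpace X] (f : X → X) (φ ψ : X → ℝ) (T ε : ℝ) : ℝ :=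
  sSup { r : ℝ | ∃ E : ℕ → Finset X,
    (∀ n ∈ STset f ψ T, (E n : Set X) ⊆ Xset f ψ T n ∧ IsSeparatedSet f n ε (E n)) ∧
    r = ∑' n : ℕ, Set.indicator (STset f ψ T)
        (fun n => ∑ x ∈ E n, Real.exp (birkhoff f φ n x)) n }

/-- The `ψ`-induced topological pressure of `φ`. -/
noncomputable def inducedPressure [MetricSpace X] (f : X → X) (φ ψ : X → ℝ) : EReal :=
  ⨆ (ε : ℝ) (_ : 0 < ε),
    Filter.limsup (fun T : ℝ => ((T⁻¹ * Real.log (Qspan f φ ψ T ε) : ℝ) : EReal)) atTop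

/-- Largest sum over `(n,ε)`-separated sets of `X`. -/
noncomputable def sepSum [MetricSpace X] (f : X → X) (φ : X → ℝ) (n : ℕ) (ε : ℝ) : ℝ :=
  sSup { r : ℝ | ∃ E : Finset X, IsSeparatedSet f n ε E ∧
    r = ∑ x ∈ E, Real.exp (birkhoff f φ n x) }

/-- The classical (Walters) topological pressure. -/
noncomputable def topPressure [MetricSpace X] (f : X → X) (φ : X → ℝ) : EReal :=
  ⨆ (ε : ℝ) (_ : 0 < ε),
    Filter.limsup (fun n : ℕ => (((n : ℝ)⁻¹ * Real.log (sepSum f φ n ε) : ℝ) : EReal)) atTop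
/-- The cell of the dynamical refinement `⋁_{i<n} f^{-i} P` indexed by itinerary `w`. -/
noncomputable def cellOf (f : X → X) {k n : ℕ} (P : Fin k → Set X) (w : Fin n → Fin k) : Set X :=
  ⋂ i : Fin n, f^[(i : ℕ)] ⁻¹' P (w i)

/-- `P` is a finite measurable partition of `X`. -/
def IsMeasPartition [MeasurableSpace X] {k : ℕ} (P : Fin k → Set X) : Prop :=
  (∀ i, MeasurableSet (P i)) ∧ Pairwise (Function.onFun Disjoint P) ∧ (⋃ i, P i) = Set.univ

/-- Entropy `H(⋁_{i<n} f^{-i} P)` of the `n`-th dynamical refinement. -/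
noncomputable def partitionEntropy [MeasurableSpace X] (μ : Measure X) (f : X → X)
    {k : ℕ} (P : Fin k → Set X) (n : ℕ) : ℝ :=
  ∑ w : Fin n → Fin k, Real.negMulLog (μ (cellOf f P w)).toReal

/-- Kolmogorov–Sinai (measure-theoretic) entropy `h_μ(f)`. -/
noncomputable def ksEntropy [MeasurableSpace X] (μ : Measure X) (f : X → X) : EReal :=
  ⨆ (k : ℕ) (P : Fin k → Set X) (_ : IsMeasPartition P),
    ⨅ n : ℕ, ((((n : ℝ) + 1)⁻¹ * partitionEntropy μ f P (n + 1) : ℝ) : EReal)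

/-- `μ` is an equilibrium measure for `ψ` and `φ`:
`(h_μ(f) + ∫ φ dμ) / ∫ ψ dμ = P_ψ(φ)` (written multiplicatively in `EReal`). -/
noncomputable def IsEquilibriumMeasure [MetricSpace X] [MeasurableSpace X]
    (f : X → X) (φ ψ : X → ℝ) (μ : Measure X) : Prop :=
  (ksEntropy μ f + ((∫ x, φ x ∂μ : ℝ) : EReal)) * (((∫ x, ψ x ∂μ)⁻¹ : ℝ) : EReal)
    = inducedPressure f φ ψ

/-!
Positive expansivity makes `μ ↦ h_μ(f)` upper semicontinuous on the compact set of invariant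
measures, so `F μ = (h_μ(f) + ∫ φ dμ) / ∫ ψ dμ` attains its supremum there and its superlevel sets
are compact. It remains to identify `sup F` with the induced pressure `P`.

For real `c`, `F μ ≤ c` means that the free energy of `χ = φ - c ψ` at `μ` is nonpositive, and the
Birkhoff sum `S_n φ` is within a constant of `S_n χ + c T` on the set where `S_n ψ ≤ T < S_{n+1} ψ`.
* If `P < c`, nearly optimal spanning sets at one level `T` turn orbits into words of a
  variable-length code whose weights satisfy the Kraft inequality. Concatenating code words and
  applying Gibbs' inequality gives `h_μ(f) + ∫ χ dμ ≤ 0` for every invariant `μ`.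
* If `c < P`, some separated sets have `∑ exp (S_n χ) ≥ 1` for arbitrarily large `n`, and limits of
  the orbit averages of their Gibbs measures are invariant with `h_μ(f) + ∫ χ dμ ≥ 0`.
-/

/-- The Shannon entropy of the finite partition of `X` into the fibres of the labelling `g`.
Finite measurable partitions are handled through such labellings throughout. -/
noncomputable def labelEntropy {ι : Type*} [MeasurableSpace X] [Fintype ι] (μ : Measure X)
    (g : X → ι) : ℝ :=
  ∑ i, Real.negMulLog (μ.real (g ⁻¹' {i}))

section Fibers

variable [MeasurableSpace X] {ι : Type*} [MeasurableSpace ι] [MeasurableSingletonClass ι]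
  {μ : Measure X} [IsFiniteMeasure μ] {g : X → ι}

lemma integrable_comp_label [Finite ι] (hg : Measurable g) (u : ι → ℝ) :
    Integrable (fun x => u (g x)) μ :=
  (Integrable.of_finite (μ := μ.map g) (f := u)).comp_measurable hg

lemma ae_measureReal_fiber_pos [Countable ι] (hg : Measurable g) :
    ∀ᵐ x ∂μ, 0 < μ.real (g ⁻¹' {g x}) := by
  refine ae_of_ae_map hg.aemeasurable (p := fun i => 0 < μ.real (g ⁻¹' {i})) ?_
  refine ae_iff_of_countable.2 fun i hi => measureReal_nonneg.lt_of_ne' ?_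
  rwa [Measure.map_apply hg (measurableSet_singleton i), ← measureReal_ne_zero_iff] at hi

end Fibers

section LabelEntropy

variable [MeasurableSpace X] {ι κ : Type*} [Fintype ι] [Fintype κ]
  {μ : Measure X} [IsProbabilityMeasure μ] {g : X → ι} {h : X → κ}

lemma labelEntropy_nonneg : 0 ≤ labelEntropy μ g :=
  Finset.sum_nonneg fun _ _ => Real.negMulLog_nonneg measureReal_nonneg measureReal_le_one

variable [MeasurableSpace ι] [MeasurableSingletonClass ι]
  [MeasurableSpace κ] [MeasurableSingletonClass κ]

lemma sum_measureReal_fiber_eq_one (hg : Measurable g) : ∑ i, μ.real (g ⁻¹' {i}) = 1 := by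
  simpa using sum_measureReal_preimage_singleton (μ := μ) Finset.univ
    fun i _ => hg (measurableSet_singleton i)

lemma integral_comp_label (hg : Measurable g) (u : ι → ℝ) :
    ∫ x, u (g x) ∂μ = ∑ i, μ.real (g ⁻¹' {i}) * u i := by
  have := Measure.isProbabilityMeasure_map hg.aemeasurable (μ := μ)
  rw [← integral_map hg.aemeasurable (measurable_of_finite u).aestronglyMeasurable,
    integral_fintype .of_finite]
  simp only [map_measureReal_apply hg (measurableSet_singleton _), smul_eq_mul]

lemma labelEntropy_eq_integral (hg : Measurable g) :
    labelEntropy μ g = -∫ x, Real.log (μ.real (g ⁻¹' {g x})) ∂μ := by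
  rw [integral_comp_label hg fun i => Real.log (μ.real (g ⁻¹' {i}))]
  simp only [labelEntropy, Real.negMulLog, neg_mul, Finset.sum_neg_distrib]

lemma negMulLog_le_sub_mul_log {p w : ℝ} (hp : 0 ≤ p) (hw : 0 ≤ w) (hpw : p ≠ 0 → 0 < w) :
    Real.negMulLog p ≤ w - p - p * Real.log w := by
  rcases hp.eq_or_lt with rfl | hp
  · simpa
  · have hlog := Real.log_le_sub_one_of_pos (div_pos (hpw hp.ne') hp)
    rw [Real.log_div (hpw hp.ne').ne' hp.ne', le_sub_iff_add_le, le_div_iff₀ hp] at hlog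
    rw [Real.negMulLog]
    linarith

theorem labelEntropy_le_neg_integral_log (hg : Measurable g) {w : ι → ℝ} (hw : ∀ i, 0 ≤ w i)
    (hgw : ∀ i, μ.real (g ⁻¹' {i}) ≠ 0 → 0 < w i) (hw1 : ∑ i, w i ≤ 1) :
    labelEntropy μ g ≤ -∫ x, Real.log (w (g x)) ∂μ := by
  calc labelEntropy μ g
    _ ≤ ∑ i, (w i - μ.real (g ⁻¹' {i}) - μ.real (g ⁻¹' {i}) * Real.log (w i)) :=
        Finset.sum_le_sum fun i _ => negMulLog_le_sub_mul_log measureReal_nonneg (hw i) (hgw i)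
    _ = ∑ i, w i - 1 - ∫ x, Real.log (w (g x)) ∂μ := by
        rw [integral_comp_label hg fun i => Real.log (w i), Finset.sum_sub_distrib,
          Finset.sum_sub_distrib, sum_measureReal_fiber_eq_one hg]
    _ ≤ -∫ x, Real.log (w (g x)) ∂μ := by linarith

lemma labelEntropy_le_log_card (hg : Measurable g) :
    labelEntropy μ g ≤ Real.log (Fintype.card ι) := by
  obtain ⟨x⟩ : Nonempty X := nonempty_of_isProbabilityMeasure μ
  have hcard : (0 : ℝ) < Fintype.card ι := by exact_mod_cast Fintype.card_pos_iff.2 ⟨g x⟩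
  calc labelEntropy μ g ≤ -∫ _, Real.log (Fintype.card ι : ℝ)⁻¹ ∂μ :=
        labelEntropy_le_neg_integral_log hg (w := fun _ => (Fintype.card ι : ℝ)⁻¹)
          (fun _ => by positivity) (fun _ _ => by positivity) (by simp [hcard.ne'])
    _ = Real.log (Fintype.card ι) := by simp

theorem labelEntropy_prodMk_le (hg : Measurable g) (hh : Measurable h) :
    labelEntropy μ (fun x => (g x, h x)) ≤ labelEntropy μ g + labelEntropy μ h := by
  set p : ι → ℝ := fun i => μ.real (g ⁻¹' {i})
  set r : κ → ℝ := fun j => μ.real (h ⁻¹' {j})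
  have hsum : ∑ ij : ι × κ, p ij.1 * r ij.2 = 1 := by
    rw [Fintype.sum_prod_type, ← Fintype.sum_mul_sum, sum_measureReal_fiber_eq_one hg,
      sum_measureReal_fiber_eq_one hh, one_mul]
  have hpos : ∀ ij : ι × κ, μ.real ((fun x => (g x, h x)) ⁻¹' {ij}) ≠ 0 → 0 < p ij.1 * r ij.2 := by
    rintro ⟨i, j⟩ hij
    rw [← measureReal_nonneg.lt_iff_ne'] at hij
    exact mul_pos (hij.trans_le (measureReal_mono fun x hx => (Prod.ext_iff.1 hx).1))
      (hij.trans_le (measureReal_mono fun x hx => (Prod.ext_iff.1 hx).2))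
  have hlog : ∀ᵐ x ∂μ, Real.log (p (g x) * r (h x)) = Real.log (p (g x)) + Real.log (r (h x)) := by
    filter_upwards [ae_measureReal_fiber_pos hg, ae_measureReal_fiber_pos hh] with x hx hx'
    exact Real.log_mul hx.ne' hx'.ne'
  calc labelEntropy μ (fun x => (g x, h x)) ≤ -∫ x, Real.log (p (g x) * r (h x)) ∂μ :=
        labelEntropy_le_neg_integral_log (hg.prodMk hh) (w := fun ij => p ij.1 * r ij.2)
          (fun _ => mul_nonneg measureReal_nonneg measureReal_nonneg) hpos hsum.le
    _ = labelEntropy μ g + labelEntropy μ h := by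
        rw [integral_congr_ae hlog, integral_add (integrable_comp_label hg fun i => Real.log (p i))
          (integrable_comp_label hh fun j => Real.log (r j)), neg_add, labelEntropy_eq_integral hg,
          labelEntropy_eq_integral hh]

theorem labelEntropy_le_of_factorsThrough (hh : Measurable h) (hgh : g.FactorsThrough h) :
    labelEntropy μ g ≤ labelEntropy μ h := by
  obtain ⟨x⟩ : Nonempty X := nonempty_of_isProbabilityMeasure μ
  have : Nonempty ι := ⟨g x⟩
  obtain ⟨e, rfl⟩ := (Function.factorsThrough_iff g).1 hgh
  have hg : Measurable (e ∘ h) := (measurable_of_finite e).comp hh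
  rw [labelEntropy_eq_integral hg, labelEntropy_eq_integral hh]
  refine neg_le_neg (integral_mono_ae
    (integrable_comp_label hh fun j => Real.log (μ.real (h ⁻¹' {j})))
    (integrable_comp_label hg fun i => Real.log (μ.real (e ∘ h ⁻¹' {i}))) ?_)
  filter_upwards [ae_measureReal_fiber_pos hh] with x hx
  exact Real.log_le_log hx (measureReal_mono fun y hy => congrArg e hy)

end LabelEntropy

/-- The itinerary of `x` through the labelling `q` during the first `n` steps of its `f`-orbit; its
fibres are the atoms of the dynamical refinement `⋁_{i<n} f^{-i} q`. -/
def itinerary {ι : Type*} (f : X → X) (q : X → ι) (n : ℕ) (x : X) : Fin n → ι :=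
  fun i => q (f^[i] x)

section Itinerary

variable {ι κ : Type*} {f : X → X} {q : X → ι}

lemma itinerary_eq_iff {n : ℕ} {x y : X} :
    itinerary f q n x = itinerary f q n y ↔ ∀ i < n, q (f^[i] x) = q (f^[i] y) := by
  simp [itinerary, funext_iff, Fin.forall_iff]

lemma itinerary_add_eq_iff {m n : ℕ} {x y : X} :
    itinerary f q (m + n) x = itinerary f q (m + n) y ↔
      itinerary f q m x = itinerary f q m y ∧
        itinerary f q n (f^[m] x) = itinerary f q n (f^[m] y) := by
  simp only [itinerary_eq_iff, ← Function.iterate_add_apply]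
  refine ⟨fun h => ⟨fun i hi => h i (by omega), fun i hi => h (i + m) (by omega)⟩,
    fun ⟨h, h'⟩ i hi => ?_⟩
  rcases lt_or_ge i m with him | him
  · exact h i him
  · simpa [Nat.sub_add_cancel him] using h' (i - m) (by omega)

variable [MeasurableSpace X] [MeasurableSpace ι]

lemma measurable_itinerary (hf : Measurable f) (hq : Measurable q) (n : ℕ) :
    Measurable (itinerary f q n) :=
  measurable_pi_lambda _ fun i => hq.comp (hf.iterate i)

variable [Fintype ι] [MeasurableSingletonClass ι] {μ : Measure X}

lemma labelEntropy_map {T : X → X} (hT : Measurable T) {g : X → ι} (hg : Measurable g) :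
    labelEntropy (μ.map T) g = labelEntropy μ (g ∘ T) := by
  simp only [labelEntropy, map_measureReal_apply hT (hg (measurableSet_singleton _)),
    preimage_comp]

lemma labelEntropy_itinerary_comp_iterate (hμ : MeasurePreserving f μ μ) (hq : Measurable q)
    (a n : ℕ) : labelEntropy μ (itinerary f q n ∘ f^[a]) = labelEntropy μ (itinerary f q n) := by
  rw [← labelEntropy_map (hμ.measurable.iterate a) (measurable_itinerary hμ.measurable hq n),
    (hμ.iterate a).map_eq]

variable [IsProbabilityMeasure μ]

lemma labelEntropy_itinerary_le (hf : Measurable f) (hq : Measurable q) (a n : ℕ) :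
    labelEntropy μ (itinerary f q n ∘ f^[a]) ≤ n * Real.log (Fintype.card ι) := by
  simpa using labelEntropy_le_log_card (μ := μ)
    ((measurable_itinerary hf hq n).comp (hf.iterate a))

lemma labelEntropy_itinerary_mono (hf : Measurable f) (hq : Measurable q) {m n : ℕ} (h : m ≤ n) :
    labelEntropy μ (itinerary f q m) ≤ labelEntropy μ (itinerary f q n) :=
  labelEntropy_le_of_factorsThrough (measurable_itinerary hf hq n) fun _ _ hxy =>
    itinerary_eq_iff.2 fun i hi => itinerary_eq_iff.1 hxy i (hi.trans_le h)

lemma labelEntropy_itinerary_add_le (hf : Measurable f) (hq : Measurable q) (a m n : ℕ) :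
    labelEntropy μ (itinerary f q (m + n) ∘ f^[a]) ≤
      labelEntropy μ (itinerary f q m ∘ f^[a]) + labelEntropy μ (itinerary f q n ∘ f^[m + a]) := by
  have hm := (measurable_itinerary hf hq m).comp (hf.iterate a)
  have hn := (measurable_itinerary hf hq n).comp (hf.iterate (m + a))
  refine (labelEntropy_le_of_factorsThrough (hm.prodMk hn) fun x y hxy => ?_).trans
    (labelEntropy_prodMk_le hm hn)
  simp only [Function.comp_apply, Function.iterate_add_apply, Prod.mk.injEq] at hxy
  exact itinerary_add_eq_iff.2 hxy

lemma sum_labelEntropy_itinerary_mul_le (hf : Measurable f) (hq : Measurable q) (m r : ℕ) :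
    ∑ j ∈ Finset.range m, labelEntropy μ (itinerary f q (r * m) ∘ f^[j]) ≤
      ∑ i ∈ Finset.range (r * m), labelEntropy μ (itinerary f q m ∘ f^[i]) := by
  induction r with
  | zero =>
    simp only [zero_mul, Finset.range_zero, Finset.sum_empty]
    exact Finset.sum_nonpos fun j _ =>
      (labelEntropy_itinerary_le hf hq j (0 * m)).trans (by simp)
  | succ r ih =>
    rw [Nat.succ_mul, Finset.sum_range_add]
    refine (Finset.sum_le_sum fun j _ => labelEntropy_itinerary_add_le hf hq j (r * m) m).trans ?_
    rw [Finset.sum_add_distrib]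
    exact add_le_add_left ih _

lemma labelEntropy_itinerary_le_round (hf : Measurable f) (hq : Measurable q) {j m : ℕ} (hj : j < m)
    (n : ℕ) :
    labelEntropy μ (itinerary f q n) ≤ labelEntropy μ (itinerary f q (n / m * m) ∘ f^[j]) +
      2 * m * Real.log (Fintype.card ι) := by
  have hlen : n ≤ j + (n / m * m + m) := by
    have := Nat.lt_div_mul_add (pos_of_gt hj) (a := n)
    omega
  have hjm : j * Real.log (Fintype.card ι) ≤ m * Real.log (Fintype.card ι) :=
    mul_le_mul_of_nonneg_right (by exact_mod_cast hj.le) (Real.log_natCast_nonneg _)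
  have hhead := labelEntropy_itinerary_add_le hf hq 0 j (n / m * m + m) (μ := μ)
  have htail := labelEntropy_itinerary_add_le hf hq j (n / m * m) m (μ := μ)
  have hhead' := labelEntropy_itinerary_le hf hq 0 j (μ := μ)
  have htail' := labelEntropy_itinerary_le hf hq (n / m * m + j) m (μ := μ)
  have hmono := labelEntropy_itinerary_mono hf hq hlen (μ := μ)
  simp only [add_zero, Function.iterate_zero, Function.comp_id] at hhead hhead'
  linarith

theorem mul_labelEntropy_itinerary_le (hf : Measurable f) (hq : Measurable q) (m n : ℕ) :
    m * labelEntropy μ (itinerary f q n) ≤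
      ∑ i ∈ Finset.range n, labelEntropy μ (itinerary f q m ∘ f^[i]) +
        2 * m ^ 2 * Real.log (Fintype.card ι) := by
  calc m * labelEntropy μ (itinerary f q n)
      = ∑ _j ∈ Finset.range m, labelEntropy μ (itinerary f q n) := by simp
    _ ≤ ∑ j ∈ Finset.range m, (labelEntropy μ (itinerary f q (n / m * m) ∘ f^[j]) +
          2 * m * Real.log (Fintype.card ι)) :=
        Finset.sum_le_sum fun j hj =>
          labelEntropy_itinerary_le_round hf hq (Finset.mem_range.1 hj) n
    _ = ∑ j ∈ Finset.range m, labelEntropy μ (itinerary f q (n / m * m) ∘ f^[j]) +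
          2 * m ^ 2 * Real.log (Fintype.card ι) := by
        rw [Finset.sum_add_distrib, Finset.sum_const, Finset.card_range, nsmul_eq_mul]
        ring
    _ ≤ ∑ i ∈ Finset.range (n / m * m), labelEntropy μ (itinerary f q m ∘ f^[i]) +
          2 * m ^ 2 * Real.log (Fintype.card ι) := by
        gcongr
        exact sum_labelEntropy_itinerary_mul_le hf hq m (n / m)
    _ ≤ ∑ i ∈ Finset.range n, labelEntropy μ (itinerary f q m ∘ f^[i]) +
          2 * m ^ 2 * Real.log (Fintype.card ι) := by
        gcongr
        · exact fun _ _ _ => labelEntropy_nonneg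
        · exact Nat.div_mul_le_self n m

lemma mul_labelEntropy_itinerary_le_of_measurePreserving (hμ : MeasurePreserving f μ μ)
    (hq : Measurable q) (m n : ℕ) :
    m * labelEntropy μ (itinerary f q n) ≤
      n * labelEntropy μ (itinerary f q m) + 2 * m ^ 2 * Real.log (Fintype.card ι) := by
  simpa [labelEntropy_itinerary_comp_iterate hμ hq] using
    mul_labelEntropy_itinerary_le hμ.measurable hq m n (μ := μ)

lemma labelEntropy_itinerary_le_mul (hμ : MeasurePreserving f μ μ) (hq : Measurable q) (n : ℕ) :
    labelEntropy μ (itinerary f q n) ≤ n * labelEntropy μ q := by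
  induction n with
  | zero => simpa using labelEntropy_itinerary_le hμ.measurable hq 0 0 (μ := μ)
  | succ n ih =>
    have hone : labelEntropy μ (itinerary f q 1) ≤ labelEntropy μ q :=
      labelEntropy_le_of_factorsThrough hq fun x y hxy => by simpa [itinerary_eq_iff] using hxy
    have hadd := labelEntropy_itinerary_add_le hμ.measurable hq 0 n 1 (μ := μ)
    simp only [labelEntropy_itinerary_comp_iterate hμ hq] at hadd
    push_cast
    linarith

end Itinerary

/-- The entropy `h_μ(f, q)` of `f` relative to the labelling `q`. As in `ksEntropy`, it is an
infimum over `n`, which for invariant `μ` is also the limit. -/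
noncomputable def labelEntropyRate {ι : Type*} [MeasurableSpace X] [Fintype ι] (μ : Measure X)
    (f : X → X) (q : X → ι) : EReal :=
  ⨅ n : ℕ, ((((n : ℝ) + 1)⁻¹ * labelEntropy μ (itinerary f q (n + 1)) : ℝ) : EReal)

section KolmogorovSinai

variable [MeasurableSpace X] {μ : Measure X} {f : X → X} {k : ℕ}

lemma partitionEntropy_fibers_eq (q : X → Fin k) (n : ℕ) :
    partitionEntropy μ f (fun i => q ⁻¹' {i}) n = labelEntropy μ (itinerary f q n) := by
  have hcell : ∀ w, cellOf f (fun i => q ⁻¹' {i}) w = itinerary f q n ⁻¹' {w} := fun w => by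
    ext x
    simp [cellOf, itinerary, funext_iff]
  simp only [partitionEntropy, labelEntropy, hcell, Measure.real]

lemma IsMeasPartition.exists_measurable_label {P : Fin k → Set X} (hP : IsMeasPartition P) :
    ∃ q : X → Fin k, Measurable q ∧ P = fun i => q ⁻¹' {i} := by
  obtain ⟨hmeas, hdisj, hunion⟩ := hP
  choose q hq using fun x => mem_iUnion.1 (hunion ▸ mem_univ x)
  have hfib : P = fun i => q ⁻¹' {i} := by
    ext i x
    refine ⟨fun hx => ?_, fun hx => mem_singleton_iff.1 hx ▸ hq x⟩
    by_contra hne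
    exact Set.disjoint_left.1 (hdisj hne) (hq x) hx
  exact ⟨q, measurable_to_countable' fun i => by simpa only [hfib] using hmeas i, hfib⟩

lemma isMeasPartition_fibers {q : X → Fin k} (hq : Measurable q) :
    IsMeasPartition fun i => q ⁻¹' {i} :=
  ⟨fun i => hq (measurableSet_singleton i), pairwise_disjoint_fiber q, by ext; simp⟩

lemma labelEntropyRate_le_ksEntropy {q : X → Fin k} (hq : Measurable q) :
    labelEntropyRate μ f q ≤ ksEntropy μ f := by
  refine le_iSup_of_le k (le_iSup₂_of_le _ (isMeasPartition_fibers hq) ?_)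
  simp only [partitionEntropy_fibers_eq, labelEntropyRate, le_refl]

lemma ksEntropy_le {a : EReal}
    (h : ∀ (k : ℕ) (q : X → Fin k), Measurable q → labelEntropyRate μ f q ≤ a) :
    ksEntropy μ f ≤ a := by
  refine iSup_le fun k => iSup₂_le fun P hP => ?_
  obtain ⟨q, hq, rfl⟩ := hP.exists_measurable_label
  simpa only [partitionEntropy_fibers_eq, labelEntropyRate] using h k q hq

variable {ι : Type*} [Fintype ι] {q : X → ι}

lemma le_labelEntropyRate {a : ℝ} (h : ∀ n : ℕ, n * a ≤ labelEntropy μ (itinerary f q n)) :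
    (a : EReal) ≤ labelEntropyRate μ f q := by
  refine le_iInf fun n => EReal.coe_le_coe_iff.2 ?_
  rw [le_inv_mul_iff₀ (by positivity)]
  exact_mod_cast h (n + 1)

lemma labelEntropyRate_le {a : ℝ}
    (h : ∀ η > 0, ∃ C : ℝ, ∀ n : ℕ, labelEntropy μ (itinerary f q n) ≤ n * (a + η) + C) :
    labelEntropyRate μ f q ≤ a := by
  refine EReal.le_of_forall_lt_iff_le.1 fun z hz => ?_
  have hη : 0 < (z - a) / 2 := by linarith [EReal.coe_lt_coe_iff.1 hz]
  obtain ⟨C, hC⟩ := h _ hη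
  obtain ⟨n, hn⟩ := exists_nat_gt (C / ((z - a) / 2))
  refine iInf_le_of_le n (EReal.coe_le_coe_iff.2 ?_)
  rw [inv_mul_le_iff₀ (by positivity)]
  rw [div_lt_iff₀ hη] at hn
  have := hC (n + 1)
  push_cast at this
  linarith

end KolmogorovSinai

section Approximation

lemma exists_pos_forall_le_dist [MetricSpace X] {ι : Type*} [Finite ι] {K : ι → Set X}
    (hK : ∀ i, IsCompact (K i)) (hdisj : Pairwise (Function.onFun Disjoint K)) :
    ∃ δ > 0, ∀ i j, i ≠ j → ∀ x ∈ K i, ∀ y ∈ K j, δ ≤ dist x y := by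
  have hcompact : IsCompact (⋃ p : {p : ι × ι // p.1 ≠ p.2}, K p.1.1 ×ˢ K p.1.2) :=
    isCompact_iUnion fun p => (hK _).prod (hK _)
  obtain ⟨δ, hδ, h⟩ := hcompact.exists_forall_le' (f := fun p : X × X => dist p.1 p.2) (a := 0)
    continuous_dist.continuousOn fun p hp => by
      obtain ⟨⟨⟨i, j⟩, hij⟩, hi, hj⟩ := mem_iUnion.1 hp
      exact dist_pos.2 fun hp => Set.disjoint_left.1 (hdisj hij) hi (hp ▸ hj)
  exact ⟨δ, hδ, fun i j hij x hx y hy => h (x, y) (mem_iUnion.2 ⟨⟨(i, j), hij⟩, hx, hy⟩)⟩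

lemma exists_pos_forall_negMulLog_add_sum_le (k : ℕ) {η : ℝ} (hη : 0 < η) :
    ∃ θ > 0, ∀ p : Fin k → ℝ, (∀ i, |p i| < θ) →
      Real.negMulLog (1 - ∑ i, p i) + ∑ i, Real.negMulLog (p i) ≤ η := by
  have hcont : Continuous fun p : Fin k → ℝ =>
      Real.negMulLog (1 - ∑ i, p i) + ∑ i, Real.negMulLog (p i) :=
    (Real.continuous_negMulLog.comp (by fun_prop)).add
      (continuous_finsetSum _ fun i _ => Real.continuous_negMulLog.comp (continuous_apply i))
  obtain ⟨θ, hθ, h⟩ := Metric.continuous_iff.1 hcont 0 η hη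
  refine ⟨θ, hθ, fun p hp => ?_⟩
  have hdist := h p ((dist_pi_lt_iff hθ).2 fun i => by simpa using hp i)
  exact (le_abs_self _).trans (by simpa using hdist.le)

lemma labelEntropy_itinerary_le_add_mul [MetricSpace X] [MeasurableSpace X] {μ : Measure X}
    [IsProbabilityMeasure μ] {f : X → X} {ι κ ν : Type*} [Fintype ι] [Fintype κ] [Fintype ν]
    [MeasurableSpace ι] [MeasurableSingletonClass ι] [MeasurableSpace κ]
    [MeasurableSingletonClass κ] [MeasurableSpace ν] [MeasurableSingletonClass ν]
    (hμ : MeasurePreserving f μ μ) {r : X → ι} {b : X → κ} {c : X → ν} {δ : ℝ} {N : ℕ}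
    (hb : Measurable b) (hc : Measurable c)
    (hbr : ∀ x y, b x = b y → dist x y < δ → r x = r y)
    (hcδ : ∀ x y, c x = c y → ∀ i < N, dist (f^[i] x) (f^[i] y) < δ) :
    labelEntropy μ (itinerary f r N) ≤ labelEntropy μ c + N * labelEntropy μ b := by
  have hbN := measurable_itinerary hμ.measurable hb N
  calc labelEntropy μ (itinerary f r N) ≤ labelEntropy μ fun x => (c x, itinerary f b N x) :=
        labelEntropy_le_of_factorsThrough (hc.prodMk hbN) fun x y hxy => by
          obtain ⟨hcxy, hbxy⟩ := Prod.mk.inj hxy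
          exact itinerary_eq_iff.2 fun i hi =>
            hbr _ _ (itinerary_eq_iff.1 hbxy i hi) (hcδ x y hcxy i hi)
    _ ≤ labelEntropy μ c + labelEntropy μ (itinerary f b N) := labelEntropy_prodMk_le hc hbN
    _ ≤ labelEntropy μ c + N * labelEntropy μ b := by
        gcongr
        exact labelEntropy_itinerary_le_mul hμ hb N

variable [MetricSpace X] [CompactSpace X] [MeasurableSpace X] [BorelSpace X] {μ : Measure X}
  [IsProbabilityMeasure μ]

-- `b` records where `r` leaves a compact set of almost full measure on which it is continuous.
theorem exists_label_labelEntropy_le {k : ℕ} {r : X → Fin k} (hr : Measurable r) {η : ℝ}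
    (hη : 0 < η) :
    ∃ b : X → Fin (k + 1), Measurable b ∧ labelEntropy μ b ≤ η ∧
      ∃ δ > 0, ∀ x y, b x = b y → dist x y < δ → r x = r y := by
  classical
  obtain ⟨θ, hθ, hsmall⟩ := exists_pos_forall_negMulLog_add_sum_le k hη
  choose K hKr hKclosed hKμ using fun i => (hr (measurableSet_singleton i)).exists_isClosed_sdiff_lt
    (measure_ne_top μ _) (ENNReal.ofReal_pos.2 hθ).ne'
  obtain ⟨δ, hδ, hsep⟩ := exists_pos_forall_le_dist (fun i => (hKclosed i).isCompact)
    fun i j hij => (pairwise_disjoint_fiber r hij).mono (hKr i) (hKr j)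
  set A : Set X := ⋃ i, K i
  set b : X → Fin (k + 1) := fun x => if x ∈ A then 0 else (r x).succ with hb
  have hbmeas : Measurable b :=
    Measurable.ite (isClosed_iUnion_of_finite hKclosed).measurableSet measurable_const
      ((measurable_of_finite Fin.succ).comp hr)
  have hsucc : ∀ i : Fin k, |μ.real (b ⁻¹' {i.succ})| < θ := fun i => by
    rw [abs_of_nonneg measureReal_nonneg, measureReal_def,
      ← ENNReal.lt_ofReal_iff_toReal_lt (measure_ne_top _ _)]
    refine (measure_mono fun x hx => ?_).trans_lt (hKμ i)
    by_cases hxA : x ∈ A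
    · simp [hb, hxA, eq_comm] at hx
    · simp only [hb, mem_preimage, hxA, if_false, mem_singleton_iff, Fin.succ_inj] at hx
      exact ⟨hx, fun hxK => hxA (mem_iUnion_of_mem i hxK)⟩
  have hzero : μ.real (b ⁻¹' {0}) = 1 - ∑ i : Fin k, μ.real (b ⁻¹' {i.succ}) := by
    rw [eq_sub_iff_add_eq, ← Fin.sum_univ_succ fun i => μ.real (b ⁻¹' {i}),
      sum_measureReal_fiber_eq_one hbmeas]
  refine ⟨b, hbmeas, ?_, δ, hδ, fun x y hxy hdist => ?_⟩
  · rw [labelEntropy, Fin.sum_univ_succ, hzero]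
    exact hsmall _ hsucc
  · by_cases hx : x ∈ A <;> by_cases hy : y ∈ A <;>
      simp only [hb, hx, hy, if_true, if_false, Fin.succ_inj, Fin.succ_ne_zero,
        (Fin.succ_ne_zero _).symm] at hxy
    · obtain ⟨i, hi⟩ := mem_iUnion.1 hx
      obtain ⟨j, hj⟩ := mem_iUnion.1 hy
      have hij : i = j := by_contra fun hij => (hsep i j hij x hi y hj).not_gt hdist
      exact (hKr i hi).trans (hij.trans (hKr j hj).symm)
    · exact hxy

theorem ksEntropy_le_of_exists_label {f : X → X} (hμ : MeasurePreserving f μ μ) {a : ℝ}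
    (h : ∀ δ > 0, ∃ C : ℝ, ∀ N : ℕ, ∃ (ι : Type*) (_ : Fintype ι) (_ : MeasurableSpace ι)
      (_ : MeasurableSingletonClass ι) (c : X → ι), Measurable c ∧
      (∀ x y, c x = c y → ∀ i < N, dist (f^[i] x) (f^[i] y) < δ) ∧
      labelEntropy μ c ≤ N * a + C) :
    ksEntropy μ f ≤ a := by
  refine ksEntropy_le fun k r hr => labelEntropyRate_le fun η hη => ?_
  obtain ⟨b, hb, hbη, δ, hδ, hbr⟩ := exists_label_labelEntropy_le hr hη (μ := μ)
  obtain ⟨C, hC⟩ := h δ hδ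
  refine ⟨C, fun N => ?_⟩
  obtain ⟨ι, _, _, _, c, hc, hcδ, hca⟩ := hC N
  calc labelEntropy μ (itinerary f r N) ≤ labelEntropy μ c + N * labelEntropy μ b :=
        labelEntropy_itinerary_le_add_mul hμ hb hc hbr hcδ
    _ ≤ N * a + C + N * η := by gcongr
    _ = N * (a + η) + C := by ring

end Approximation

/-- `ε` is an expansivity constant of `f`: points whose forward orbits stay `ε`-close coincide.
Positive expansivity is the existence of a positive one. -/
def IsExpansivityConstant [MetricSpace X] (f : X → X) (ε : ℝ) : Prop :=
  ∀ x y : X, (∀ n : ℕ, dist (f^[n] x) (f^[n] y) < ε) → x = y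

section Expansivity

variable [MetricSpace X] [CompactSpace X] {f : X → X} {ε ε' : ℝ}

theorem IsExpansivityConstant.exists_forall_dist_lt (hε : IsExpansivityConstant f ε)
    (hf : Continuous f) (hε' : ε' < ε) {δ : ℝ} (hδ : 0 < δ) :
    ∃ m : ℕ, ∀ x y : X, (∀ i < m, dist (f^[i] x) (f^[i] y) ≤ ε') → dist x y < δ := by
  by_contra! hcon
  set C : ℕ → Set (X × X) := fun m =>
    {p | (∀ i < m, dist (f^[i] p.1) (f^[i] p.2) ≤ ε') ∧ δ ≤ dist p.1 p.2} with hC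
  have hclosed : ∀ m, IsClosed (C m) := fun m => by
    simp only [hC, ofPred_and, ofPred_forall]
    exact (isClosed_biInter fun i _ => isClosed_le
      (((hf.iterate i).comp continuous_fst).dist ((hf.iterate i).comp continuous_snd))
      continuous_const).inter (isClosed_le continuous_const continuous_dist)
  obtain ⟨⟨x, y⟩, hxy⟩ := IsCompact.nonempty_iInter_of_sequence_nonempty_isCompact_isClosed C
    (fun m p hp => ⟨fun i hi => hp.1 i (hi.trans m.lt_succ_self), hp.2⟩)
    (fun m => let ⟨x, y, h⟩ := hcon m; ⟨(x, y), h⟩) (hclosed 0).isCompact hclosed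
  rw [mem_iInter] at hxy
  have hdist : δ ≤ dist x y := (hxy 0).2
  have heq : x = y := hε x y fun n => ((hxy (n + 1)).1 n n.lt_succ_self).trans_lt hε'
  rw [heq, dist_self] at hdist
  exact hdist.not_gt hδ

theorem IsExpansivityConstant.ksEntropy_le_labelEntropyRate [MeasurableSpace X] [BorelSpace X]
    (hε : IsExpansivityConstant f ε) (hf : Continuous f) (hε' : ε' < ε) {μ : Measure X}
    [IsProbabilityMeasure μ] (hμ : MeasurePreserving f μ μ) {k : ℕ} {q : X → Fin k}
    (hq : Measurable q) (hqε' : ∀ x y, q x = q y → dist x y ≤ ε') :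
    ksEntropy μ f ≤ labelEntropyRate μ f q := by
  refine le_iInf fun m => ksEntropy_le_of_exists_label hμ fun δ hδ => ?_
  obtain ⟨s, hs⟩ := hε.exists_forall_dist_lt hf hε' hδ
  set H := labelEntropy μ (itinerary f q (m + 1))
  refine ⟨((m : ℝ) + 1)⁻¹ * (s * H + 2 * (m + 1) ^ 2 * Real.log (Fintype.card (Fin k))),
    fun N => ⟨_, inferInstance, inferInstance, inferInstance, itinerary f q (N + s),
      measurable_itinerary hf.measurable hq _, fun x y hxy i hi => hs _ _ fun j hj => ?_, ?_⟩⟩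
  · simp only [← Function.iterate_add_apply]
    exact hqε' _ _ (itinerary_eq_iff.1 hxy (j + i) (by omega))
  · have hblock := mul_labelEntropy_itinerary_le_of_measurePreserving hμ hq (m + 1) (N + s)
    push_cast at hblock
    rw [← mul_le_mul_iff_right₀ (show (0 : ℝ) < m + 1 by positivity)]
    field_simp
    linarith

end Expansivity

section WeakLimits

lemma frontier_iInter_subset_of_finite [TopologicalSpace X] {ι : Type*} [Finite ι]
    (s : ι → Set X) : frontier (⋂ i, s i) ⊆ ⋃ i, frontier (s i) := by
  rintro x ⟨hx, hx'⟩
  rw [interior_iInter_of_finite, mem_iInter, not_forall] at hx'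
  obtain ⟨i, hi⟩ := hx'
  exact mem_iUnion.2 ⟨i, closure_mono (iInter_subset s i) hx, hi⟩

lemma measurable_setOf_mem [MeasurableSpace X] {ι : Type*} {B : ι → Set X}
    (hB : ∀ p, MeasurableSet (B p)) : Measurable fun x => {p | x ∈ B p} :=
  measurable_set_iff.2 fun p => measurableSet_setOfPred.1 (hB p)

lemma measure_frontier_setOf_mem_fiber [TopologicalSpace X] [MeasurableSpace X] {ι : Type*}
    [Finite ι] {ν : Measure X} {B : ι → Set X} (hB : ∀ p, ν (frontier (B p)) = 0) (s : Set ι) :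
    ν (frontier ((fun x => {p | x ∈ B p}) ⁻¹' {s})) = 0 := by
  classical
  have hfiber : (fun x => {p | x ∈ B p}) ⁻¹' {s} = ⋂ p, if p ∈ s then B p else (B p)ᶜ := by
    ext x
    simp only [mem_preimage, mem_singleton_iff, Set.ext_iff, mem_ofPred_eq, mem_iInter]
    refine forall_congr' fun p => ?_
    split_ifs with hp <;> simp [hp]
  rw [hfiber]
  refine measure_mono_null (frontier_iInter_subset_of_finite _) (measure_iUnion_null fun p => ?_)
  split_ifs
  · exact hB p
  · rw [frontier_compl]
    exact hB p

theorem exists_label_measure_frontier_eq_zero [MetricSpace X] [CompactSpace X] [MeasurableSpace X]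
    [BorelSpace X] (ν : Measure X) [IsFiniteMeasure ν] {δ : ℝ} (hδ : 0 < δ) :
    ∃ (k : ℕ) (q : X → Fin k), Measurable q ∧ (∀ x y, q x = q y → dist x y ≤ δ) ∧
      ∀ i, ν (frontier (q ⁻¹' {i})) = 0 := by
  classical
  have hradius : ∀ x : X, ∃ r ∈ Ioo 0 (δ / 2), ν (frontier (Metric.ball x r)) = 0 := fun x => by
    simpa only [Metric.thickening_singleton] using
      exists_null_frontier_thickening ν {x} (half_pos hδ)
  choose r hr hν using hradius
  obtain ⟨t, ht⟩ := CompactSpace.elim_nhds_subcover (fun x => Metric.ball x (r x))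
    fun x => Metric.ball_mem_nhds x (hr x).1
  let B : t → Set X := fun p => Metric.ball p (r p)
  let e := Fintype.equivFin (Set t)
  refine ⟨_, fun x => e {p | x ∈ B p},
    (measurable_of_finite e).comp (measurable_setOf_mem fun p => measurableSet_ball),
    fun x y hxy => ?_, fun i => ?_⟩
  · obtain ⟨p, hp, hxp⟩ := mem_iUnion₂.1 (ht ▸ mem_univ x : x ∈ ⋃ p ∈ t, Metric.ball p (r p))
    have hyp : (⟨p, hp⟩ : t) ∈ {p | y ∈ B p} := e.injective hxy ▸ hxp
    have hxd : dist x p < r p := hxp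
    have hyd : dist y p < r p := hyp
    linarith [dist_triangle_right x y p, (hr p).2]
  · have hfiber : (fun x => e {p | x ∈ B p}) ⁻¹' {i} = (fun x => {p | x ∈ B p}) ⁻¹' {e.symm i} := by
      ext x
      simp [e.eq_symm_apply]
    rw [hfiber]
    exact measure_frontier_setOf_mem_fiber (B := B) (fun p => hν _) _

variable {ι : Type*} {L : Filter ι} {f : X → X}

lemma tendsto_labelEntropy_itinerary [TopologicalSpace X] [HasOuterApproxClosed X]
    [MeasurableSpace X] [BorelSpace X] {μs : ι → ProbabilityMeasure X} {μ : ProbabilityMeasure X}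
    (hμs : Tendsto μs L (𝓝 μ)) (hf : Continuous f)
    (hμ : MeasurePreserving f (μ : Measure X) μ) {k : ℕ} {q : X → Fin k}
    (hqμ : ∀ i, (μ : Measure X) (frontier (q ⁻¹' {i})) = 0) (m : ℕ) :
    Tendsto (fun t => labelEntropy (μs t : Measure X) (itinerary f q m)) L
      (𝓝 (labelEntropy (μ : Measure X) (itinerary f q m))) := by
  refine tendsto_finsetSum _ fun w _ => (Real.continuous_negMulLog.tendsto _).comp
    ((ENNReal.tendsto_toReal (measure_ne_top _ _)).comp
      (ProbabilityMeasure.tendsto_measure_of_null_frontier_of_tendsto' hμs ?_))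
  have hcylinder : itinerary f q m ⁻¹' {w} = ⋂ i : Fin m, f^[i] ⁻¹' (q ⁻¹' {w i}) := by
    ext x
    simp [itinerary, funext_iff]
  rw [hcylinder]
  refine measure_mono_null (frontier_iInter_subset_of_finite _) (measure_iUnion_null fun i => ?_)
  refine measure_mono_null ((hf.iterate i).frontier_preimage_subset _) ?_
  rw [(hμ.iterate i).measure_preimage isClosed_frontier.measurableSet.nullMeasurableSet]
  exact hqμ _

lemma tendsto_integral_of_tendsto [TopologicalSpace X] [CompactSpace X] [MeasurableSpace X]
    [OpensMeasurableSpace X] {μs : ι → ProbabilityMeasure X} {μ : ProbabilityMeasure X}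
    (hμs : Tendsto μs L (𝓝 μ)) {χ : X → ℝ} (hχ : Continuous χ) :
    Tendsto (fun t => ∫ x, χ x ∂(μs t : Measure X)) L (𝓝 (∫ x, χ x ∂(μ : Measure X))) :=
  ProbabilityMeasure.tendsto_iff_forall_integral_tendsto.1 hμs
    (BoundedContinuousFunction.mkOfCompact ⟨χ, hχ⟩)

end WeakLimits

/-- The invariant measures `M(X, f)`, as a subset of the space of Borel probability measures with
the weak-* topology. -/
def invariantMeasures [MeasurableSpace X] (f : X → X) : Set (ProbabilityMeasure X) :=
  {μ | MeasurePreserving f (μ : Measure X) μ}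

section InvariantMeasures

variable [MetricSpace X] [MeasurableSpace X] [BorelSpace X] {f : X → X}

lemma isClosed_invariantMeasures (hf : Continuous f) : IsClosed (invariantMeasures f) := by
  have hfix : invariantMeasures f = {μ | μ.map hf.measurable.aemeasurable = μ} := by
    ext μ
    rw [mem_ofPred_eq, ← ProbabilityMeasure.toMeasure_injective.eq_iff,
      ProbabilityMeasure.toMeasure_map]
    exact ⟨fun h => h.map_eq, fun h => ⟨hf.measurable, h⟩⟩
  rw [hfix]
  exact isClosed_eq (ProbabilityMeasure.continuous_map hf) continuous_id

variable [CompactSpace X]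

theorem IsExpansivityConstant.upperSemicontinuousOn_ksEntropy {ε : ℝ}
    (hε : IsExpansivityConstant f ε) (hε0 : 0 < ε) (hf : Continuous f) :
    UpperSemicontinuousOn (fun μ : ProbabilityMeasure X => ksEntropy (μ : Measure X) f)
      (invariantMeasures f) := by
  intro μ hμ y hy
  obtain ⟨k, q, hq, hqε, hqμ⟩ :=
    exists_label_measure_frontier_eq_zero (μ : Measure X) (half_pos hε0)
  obtain ⟨m, hm⟩ := iInf_lt_iff.1 ((labelEntropyRate_le_ksEntropy hq).trans_lt hy)
  have htendsto := (continuous_coe_real_ereal.tendsto _).comp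
    ((tendsto_labelEntropy_itinerary tendsto_id hf hμ hqμ (m + 1)).const_mul ((m : ℝ) + 1)⁻¹)
  filter_upwards [self_mem_nhdsWithin, (htendsto.eventually_lt_const hm).filter_mono
    nhdsWithin_le_nhds] with ν hν hνy
  exact (hε.ksEntropy_le_labelEntropyRate hf (half_lt_self hε0) hν hq hqε).trans_lt
    ((iInf_le _ m).trans_lt hνy)

end InvariantMeasures

/-- The free energy `h_μ(f) + ∫ χ dμ` of the potential `χ`. -/
noncomputable def freeEnergy [MeasurableSpace X] (f : X → X) (χ : X → ℝ) (μ : Measure X) : EReal :=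
  ksEntropy μ f + ((∫ x, χ x ∂μ : ℝ) : EReal)

/-- The ratio `(h_μ(f) + ∫ φ dμ) / ∫ ψ dμ` which is maximised by the equilibrium measures. As in
`IsEquilibriumMeasure`, division is multiplication by the real inverse of `∫ ψ dμ`. -/
noncomputable def inducedFreeEnergy [MeasurableSpace X] (f : X → X) (φ ψ : X → ℝ)
    (μ : Measure X) : EReal :=
  freeEnergy f φ μ * (((∫ x, ψ x ∂μ)⁻¹ : ℝ) : EReal)

section FreeEnergy

lemma ereal_add_mul_inv_le_iff {a : EReal} {I J c : ℝ} (hJ : 0 < J) :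
    (a + (I : EReal)) * ((J⁻¹ : ℝ) : EReal) ≤ c ↔ a + ((I - c * J : ℝ) : EReal) ≤ 0 := by
  induction a with
  | bot => simp [EReal.bot_mul_coe_of_pos (inv_pos.2 hJ)]
  | top =>
    rw [EReal.top_add_coe, EReal.top_add_coe]
    simp [EReal.top_mul_coe_of_pos (inv_pos.2 hJ)]
  | coe a =>
    norm_cast
    rw [mul_inv_le_iff₀ hJ, ← add_sub_assoc, sub_nonpos]

lemma ereal_add_mul_inv_lt_iff {a : EReal} {I J c : ℝ} (hJ : 0 < J) :
    (a + (I : EReal)) * ((J⁻¹ : ℝ) : EReal) < c ↔ a + ((I - c * J : ℝ) : EReal) < 0 := by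
  induction a with
  | bot => simp [EReal.bot_mul_coe_of_pos (inv_pos.2 hJ)]
  | top =>
    rw [EReal.top_add_coe, EReal.top_add_coe]
    simp [EReal.top_mul_coe_of_pos (inv_pos.2 hJ)]
  | coe a =>
    norm_cast
    rw [mul_inv_lt_iff₀ hJ, ← add_sub_assoc, sub_neg]

variable [MeasurableSpace X] {f : X → X} {φ ψ : X → ℝ} {μ : Measure X} {c : ℝ}

lemma freeEnergy_sub_mul (hφ : Integrable φ μ) (hψ : Integrable ψ μ) :
    freeEnergy f (fun x => φ x - c * ψ x) μ =
      ksEntropy μ f + ((∫ x, φ x ∂μ - c * ∫ x, ψ x ∂μ : ℝ) : EReal) := by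
  rw [freeEnergy, integral_sub hφ (hψ.const_mul c), integral_const_mul]

lemma inducedFreeEnergy_le_iff (hφ : Integrable φ μ) (hψ : Integrable ψ μ)
    (hpos : 0 < ∫ x, ψ x ∂μ) :
    inducedFreeEnergy f φ ψ μ ≤ c ↔ freeEnergy f (fun x => φ x - c * ψ x) μ ≤ 0 := by
  rw [freeEnergy_sub_mul hφ hψ]
  exact ereal_add_mul_inv_le_iff hpos

lemma inducedFreeEnergy_lt_iff (hφ : Integrable φ μ) (hψ : Integrable ψ μ)
    (hpos : 0 < ∫ x, ψ x ∂μ) :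
    inducedFreeEnergy f φ ψ μ < c ↔ freeEnergy f (fun x => φ x - c * ψ x) μ < 0 := by
  rw [freeEnergy_sub_mul hφ hψ]
  exact ereal_add_mul_inv_lt_iff hpos

end FreeEnergy

section Semicontinuity

variable [TopologicalSpace X] [CompactSpace X] [MeasurableSpace X] [OpensMeasurableSpace X]
  {f : X → X} {φ ψ χ : X → ℝ}

lemma integrable_of_continuous (hχ : Continuous χ) (μ : Measure X) [IsFiniteMeasure μ] :
    Integrable χ μ :=
  hχ.integrable_of_hasCompactSupport (HasCompactSupport.of_compactSpace χ)

lemma integral_pos_of_continuous (hψ : Continuous ψ) (hpos : ∀ x, 0 < ψ x)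
    (μ : Measure X) [IsProbabilityMeasure μ] : 0 < ∫ x, ψ x ∂μ := by
  rw [integral_pos_iff_support_of_nonneg (fun x => (hpos x).le) (integrable_of_continuous hψ μ),
    Function.support_eq_univ fun x => (hpos x).ne']
  exact (measure_univ (μ := μ)).symm ▸ one_pos

lemma upperSemicontinuousOn_freeEnergy {S : Set (ProbabilityMeasure X)}
    (husc : UpperSemicontinuousOn (fun μ : ProbabilityMeasure X => ksEntropy (μ : Measure X) f) S)
    (hχ : Continuous χ) :
    UpperSemicontinuousOn (fun μ : ProbabilityMeasure X => freeEnergy f χ (μ : Measure X)) S := by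
  have hint : Continuous fun μ : ProbabilityMeasure X => ∫ x, χ x ∂(μ : Measure X) :=
    continuous_iff_continuousAt.2 fun μ => tendsto_integral_of_tendsto tendsto_id hχ
  exact husc.add'
    ((continuous_coe_real_ereal.comp hint).upperSemicontinuous.upperSemicontinuousOn _)
    fun μ _ => EReal.continuousAt_add (.inr (EReal.coe_ne_bot _)) (.inr (EReal.coe_ne_top _))

lemma upperSemicontinuousOn_inducedFreeEnergy {S : Set (ProbabilityMeasure X)}
    (husc : UpperSemicontinuousOn (fun μ : ProbabilityMeasure X => ksEntropy (μ : Measure X) f) S)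
    (hφ : Continuous φ) (hψ : Continuous ψ) (hpos : ∀ x, 0 < ψ x) :
    UpperSemicontinuousOn
      (fun μ : ProbabilityMeasure X => inducedFreeEnergy f φ ψ (μ : Measure X)) S := by
  intro μ hμ y hy
  obtain ⟨c, hμc, hcy⟩ := EReal.lt_iff_exists_real_btwn.1 hy
  have hlt_iff : ∀ ν : ProbabilityMeasure X, inducedFreeEnergy f φ ψ (ν : Measure X) < c ↔
      freeEnergy f (fun x => φ x - c * ψ x) (ν : Measure X) < 0 := fun ν =>
    inducedFreeEnergy_lt_iff (integrable_of_continuous hφ _) (integrable_of_continuous hψ _)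
      (integral_pos_of_continuous hψ hpos _)
  filter_upwards [upperSemicontinuousOn_freeEnergy husc (hφ.sub (hψ.const_mul c)) μ hμ 0
    ((hlt_iff μ).1 hμc)] with ν hν
  exact ((hlt_iff ν).2 hν).trans hcy

end Semicontinuity

section Birkhoff

variable {f : X → X} {φ ψ χ : X → ℝ} {n : ℕ} {x y : X}

lemma birkhoff_succ : birkhoff f χ (n + 1) x = birkhoff f χ n x + χ (f^[n] x) :=
  birkhoffSum_succ f χ n x

lemma birkhoff_add (m : ℕ) : birkhoff f χ (m + n) x = birkhoff f χ m x + birkhoff f χ n (f^[m] x) :=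
  birkhoffSum_add f χ m n x

lemma birkhoff_sub_const_mul (c : ℝ) :
    birkhoff f (fun x => φ x - c * ψ x) n x = birkhoff f φ n x - c * birkhoff f ψ n x := by
  simp only [birkhoff, Finset.sum_sub_distrib, Finset.mul_sum]

lemma birkhoff_le {b : ℝ} (hb : ∀ x, χ x ≤ b) : birkhoff f χ n x ≤ n * b := by
  simpa [birkhoff] using
    Finset.sum_le_card_nsmul (Finset.range n) (fun i => χ (f^[i] x)) b fun i _ => hb _

lemma le_birkhoff {a : ℝ} (ha : ∀ x, a ≤ χ x) : n * a ≤ birkhoff f χ n x := by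
  simpa [birkhoff] using
    Finset.card_nsmul_le_sum (Finset.range n) (fun i => χ (f^[i] x)) a fun i _ => ha _

lemma birkhoff_le_add_of_forall_dist_le [MetricSpace X] {δ o : ℝ}
    (ho : ∀ x y, dist x y ≤ δ → χ x ≤ χ y + o)
    (hxy : ∀ i < n, dist (f^[i] x) (f^[i] y) ≤ δ) :
    birkhoff f χ n x ≤ birkhoff f χ n y + n * o := by
  have hsum := Finset.sum_le_sum fun i hi => ho _ _ (hxy i (Finset.mem_range.1 hi))
  rw [Finset.sum_add_distrib] at hsum
  simpa [birkhoff] using hsum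

lemma continuous_birkhoff [TopologicalSpace X] (hf : Continuous f) (hχ : Continuous χ) (n : ℕ) :
    Continuous (birkhoff f χ n) :=
  continuous_finsetSum _ fun i _ => hχ.comp (hf.iterate i)

lemma integral_birkhoff [MeasurableSpace X] {μ : Measure X} (hμ : MeasurePreserving f μ μ)
    (hχ : Integrable χ μ) : ∫ x, birkhoff f χ n x ∂μ = n * ∫ x, χ x ∂μ := by
  have hiterate : ∀ i, ∫ x, χ (f^[i] x) ∂μ = ∫ x, χ x ∂μ := fun i => by
    have hmap := (hμ.iterate i).map_eq
    rw [← integral_map (hμ.iterate i).aemeasurable (hmap.symm ▸ hχ.aestronglyMeasurable), hmap]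
  have hint : ∀ i, Integrable (fun x => χ (f^[i] x)) μ := fun i =>
    (hμ.iterate i).integrable_comp_of_integrable hχ
  simp only [birkhoff]
  rw [integral_finsetSum _ fun i _ => hint i]
  simp [hiterate]

end Birkhoff

section StoppingTimes

variable {f : X → X} {φ ψ : X → ℝ} {T m B : ℝ} {n : ℕ} {x : X}

lemma exists_mem_Xset (hm : 0 < m) (hψ : ∀ x, m ≤ ψ x) (hT : 0 ≤ T) (x : X) :
    ∃ n, x ∈ Xset f ψ T n := by
  classical
  have hexceed : ∃ n : ℕ, T < birkhoff f ψ (n + 1) x := by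
    obtain ⟨n, hn⟩ := exists_nat_gt (T / m)
    rw [div_lt_iff₀ hm] at hn
    have hle : ((n + 1 : ℕ) : ℝ) * m ≤ birkhoff f ψ (n + 1) x := le_birkhoff hψ
    push_cast at hle
    exact ⟨n, by linarith⟩
  refine ⟨Nat.find hexceed, ?_, Nat.find_spec hexceed⟩
  rcases h : Nat.find hexceed with _ | n
  · simpa [birkhoff] using hT
  · exact not_lt.1 (Nat.find_min hexceed (h ▸ n.lt_succ_self))

lemma STset_subset_Iic (hm : 0 < m) (hψ : ∀ x, m ≤ ψ x) :
    STset f ψ T ⊆ Finset.Iic ⌊T / m⌋₊ := by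
  rintro n ⟨x, hx, -⟩
  exact Finset.mem_coe.2 (Finset.mem_Iic.2
    (Nat.le_floor ((le_div_iff₀ hm).2 ((le_birkhoff hψ).trans hx))))

lemma finite_STset (hm : 0 < m) (hψ : ∀ x, m ≤ ψ x) : (STset f ψ T).Finite :=
  (Finset.finite_toSet _).subset (STset_subset_Iic hm hψ)

lemma ncard_STset_le (hm : 0 < m) (hψ : ∀ x, m ≤ ψ x) (hT : 0 ≤ T) :
    (STset f ψ T).ncard ≤ T / m + 1 := by
  have hcard := ncard_le_ncard (STset_subset_Iic (f := f) (T := T) hm hψ)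
  rw [ncard_coe_finset, Nat.card_Iic] at hcard
  calc ((STset f ψ T).ncard : ℝ) ≤ (⌊T / m⌋₊ + 1 : ℕ) := by exact_mod_cast hcard
    _ ≤ T / m + 1 := by
      push_cast
      gcongr
      exact Nat.floor_le (by positivity)

lemma tsum_indicator_STset (hS : (STset f ψ T).Finite) (u : ℕ → ℝ) :
    ∑' n, (STset f ψ T).indicator u n = ∑ n ∈ hS.toFinset, u n := by
  rw [tsum_eq_sum (s := hS.toFinset) fun n hn => indicator_of_notMem (by simpa using hn) u]
  exact Finset.sum_congr rfl fun n hn => indicator_of_mem (by simpa using hn) u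

lemma lt_mul_of_mem_Xset (hψ : ∀ x, ψ x ≤ B) (hx : x ∈ Xset f ψ T n) : T < (n + 1) * B := by
  exact_mod_cast hx.2.trans_le (birkhoff_le hψ)

lemma abs_birkhoff_sub_le_of_mem_Xset (hψ : ∀ x, ψ x ≤ B) (hx : x ∈ Xset f ψ T n) :
    |birkhoff f ψ n x - T| ≤ B := by
  have hlt := hx.2
  rw [birkhoff_succ] at hlt
  rw [abs_sub_comm, abs_of_nonneg (sub_nonneg.2 hx.1)]
  linarith [hψ (f^[n] x)]

lemma abs_birkhoff_sub_mul_le_of_mem_Xset (hψ : ∀ x, ψ x ≤ B) (hx : x ∈ Xset f ψ T n) (c : ℝ) :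
    |birkhoff f (fun x => φ x - c * ψ x) n x - (birkhoff f φ n x - c * T)| ≤ |c| * B := by
  rw [birkhoff_sub_const_mul, sub_sub_sub_cancel_left, ← mul_sub, abs_mul, abs_sub_comm]
  exact mul_le_mul_of_nonneg_left (abs_birkhoff_sub_le_of_mem_Xset hψ hx) (abs_nonneg c)

end StoppingTimes

section BowenMetric

variable [MetricSpace X] {f : X → X} {n : ℕ} {ε : ℝ} {x y : X}

lemma dynDist_eq_dist_pi (f : X → X) (n : ℕ) (x y : X) :
    dynDist f n x y = dist (fun i : Fin n => f^[i] x) fun i : Fin n => f^[i] y := by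
  refine le_antisymm (Real.iSup_le (fun i => dist_le_pi_dist (fun i : Fin n => f^[i] x)
    (fun i : Fin n => f^[i] y) i) dist_nonneg)
    ((dist_pi_le_iff (Real.iSup_nonneg fun _ => dist_nonneg)).2 fun i => ?_)
  exact le_ciSup (f := fun i : Fin n => dist (f^[i] x) (f^[i] y)) (finite_range _).bddAbove i

lemma dynDist_comm : dynDist f n x y = dynDist f n y x := by
  simp only [dynDist_eq_dist_pi, dist_comm]

lemma dynDist_le_iff (hε : 0 ≤ ε) :
    dynDist f n x y ≤ ε ↔ ∀ i < n, dist (f^[i] x) (f^[i] y) ≤ ε := by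
  rw [dynDist_eq_dist_pi, dist_pi_le_iff hε, Fin.forall_iff]

theorem exists_isSeparatedSet_isSpanningSet [CompactSpace X] (f : X → X) (n : ℕ) (hε : 0 < ε)
    (Z : Set X) : ∃ E : Finset X, (E : Set X) ⊆ Z ∧ IsSeparatedSet f n ε E ∧
      IsSpanningSet f n ε Z E := by
  lift ε to NNReal using hε.le
  let orbit : X → Fin n → X := fun x i => f^[i] x
  let S := Metric.maximalSeparatedSet ε (orbit '' Z)
  have hpacking : Metric.packingNumber ε (orbit '' Z) ≠ ⊤ := by
    obtain ⟨N, -, hN, hcover⟩ := Metric.exists_finite_isCover_of_totallyBounded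
      (half_pos (NNReal.coe_pos.1 hε)).ne' (isCompact_univ.totallyBounded.subset
        (subset_univ (orbit '' Z)))
    have hle := (Metric.packingNumber_two_mul_le_externalCoveringNumber (ε / 2) _).trans
      hcover.externalCoveringNumber_le_encard
    rw [mul_div_cancel₀ _ two_ne_zero] at hle
    exact ne_top_of_le_ne_top hN.encard_lt_top.ne hle
  have hSfin : S.Finite := by
    rw [← encard_lt_top_iff, Metric.encard_maximalSeparatedSet hpacking]
    exact hpacking.lt_top
  obtain ⟨E, hEZ, hE⟩ :=
    SurjOn.exists_bijOn_subset (f := orbit) (s := Z) (t := S) Metric.maximalSeparatedSet_subset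
  lift E to Finset X using hE.finite_iff_finite.2 hSfin
  refine ⟨E, hEZ, fun x hx y hy hxy => ?_, fun y hy => ?_⟩
  · have hlt : (ε : ENNReal) < edist (orbit x) (orbit y) := Metric.isSeparated_maximalSeparatedSet
      (hE.mapsTo hx) (hE.mapsTo hy) (hE.injOn.ne hx hy hxy)
    rw [edist_nndist, ENNReal.coe_lt_coe] at hlt
    rw [dynDist_eq_dist_pi]
    exact hlt
  · obtain ⟨s, hs, hys⟩ := Metric.isCover_maximalSeparatedSet hpacking (mem_image_of_mem orbit hy)
    obtain ⟨x, hx, rfl⟩ := hE.surjOn hs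
    refine ⟨x, hx, ?_⟩
    rw [dynDist_comm, dynDist_eq_dist_pi]
    change edist (orbit y) (orbit x) ≤ ε at hys
    rw [edist_nndist, ENNReal.coe_le_coe] at hys
    exact hys

end BowenMetric

section Qspan

variable [MetricSpace X] {f : X → X} {φ ψ : X → ℝ} {T ε : ℝ}

lemma Qspan_le (hS : (STset f ψ T).Finite) {F : ℕ → Finset X}
    (hF : ∀ n ∈ STset f ψ T, IsSpanningSet f n ε (Xset f ψ T n) (F n)) :
    Qspan f φ ψ T ε ≤ ∑ n ∈ hS.toFinset, ∑ x ∈ F n, Real.exp (birkhoff f φ n x) := by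
  rw [← tsum_indicator_STset]
  refine csInf_le ⟨0, ?_⟩ ⟨F, hF, rfl⟩
  rintro _ ⟨G, -, rfl⟩
  exact tsum_nonneg fun n => indicator_nonneg
    (fun n _ => Finset.sum_nonneg fun x _ => (Real.exp_pos _).le) n

variable [CompactSpace X]

lemma exists_isSpanningSet_of_Qspan_lt (hS : (STset f ψ T).Finite) (hε : 0 < ε) {r : ℝ}
    (hr : Qspan f φ ψ T ε < r) : ∃ F : ℕ → Finset X,
      (∀ n ∈ STset f ψ T, IsSpanningSet f n ε (Xset f ψ T n) (F n)) ∧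
      ∑ n ∈ hS.toFinset, ∑ x ∈ F n, Real.exp (birkhoff f φ n x) < r := by
  choose G _ _ hG using fun n => exists_isSeparatedSet_isSpanningSet f n hε (Xset f ψ T n)
  obtain ⟨_, ⟨F, hF, rfl⟩, hlt⟩ :=
    exists_lt_of_csInf_lt (by exact ⟨_, G, fun n _ => hG n, rfl⟩) hr
  exact ⟨F, hF, tsum_indicator_STset hS _ ▸ hlt⟩

lemma Qspan_pos (hφ : Continuous φ) (hS : (STset f ψ T).Finite) (hne : (STset f ψ T).Nonempty)
    (hε : 0 < ε) : 0 < Qspan f φ ψ T ε := by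
  obtain ⟨a, ha⟩ := isCompact_univ.bddBelow_image hφ.continuousOn
  obtain ⟨n, x, hx⟩ := hne
  choose G _ _ hG using fun n => exists_isSeparatedSet_isSpanningSet f n hε (Xset f ψ T n)
  refine (Real.exp_pos (n * a)).trans_le (le_csInf ⟨_, G, fun n _ => hG n, rfl⟩ ?_)
  rintro _ ⟨F, hF, rfl⟩
  obtain ⟨z, hz, -⟩ := hF n ⟨x, hx⟩ x hx
  rw [tsum_indicator_STset hS]
  calc Real.exp (n * a) ≤ Real.exp (birkhoff f φ n z) :=
        Real.exp_le_exp.2 (le_birkhoff fun x => ha (mem_image_of_mem φ (mem_univ x)))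
    _ ≤ ∑ x ∈ F n, Real.exp (birkhoff f φ n x) :=
        Finset.single_le_sum (f := fun x => Real.exp (birkhoff f φ n x))
          (fun _ _ => (Real.exp_pos _).le) hz
    _ ≤ _ := Finset.single_le_sum (f := fun n => ∑ x ∈ F n, Real.exp (birkhoff f φ n x))
        (fun _ _ => Finset.sum_nonneg fun _ _ => (Real.exp_pos _).le)
        (hS.mem_toFinset.2 ⟨x, hx⟩)

lemma exists_isSeparatedSet_Qspan_le (f : X → X) (φ : X → ℝ) (hS : (STset f ψ T).Finite)
    (hne : (STset f ψ T).Nonempty) (hε : 0 < ε) :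
    ∃ n ∈ STset f ψ T, ∃ E : Finset X, (E : Set X) ⊆ Xset f ψ T n ∧ IsSeparatedSet f n ε E ∧
      Qspan f φ ψ T ε ≤ (STset f ψ T).ncard * ∑ x ∈ E, Real.exp (birkhoff f φ n x) := by
  choose E hE hsep hspan using
    fun n => exists_isSeparatedSet_isSpanningSet f n hε (Xset f ψ T n)
  obtain ⟨n, hn, hmax⟩ := hS.toFinset.exists_max_image
    (fun n => ∑ x ∈ E n, Real.exp (birkhoff f φ n x)) (hS.toFinset_nonempty.2 hne)
  refine ⟨n, hS.mem_toFinset.1 hn, E n, hE n, hsep n,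
    (Qspan_le hS fun n _ => hspan n).trans ((Finset.sum_le_card_nsmul _ _ _ hmax).trans_eq ?_)⟩
  rw [nsmul_eq_mul, ncard_eq_toFinset_card _ hS]

end Qspan

section PressureLower

variable {f : X → X} {φ ψ : X → ℝ} {m B : ℝ}

lemma eventually_mul_add_le_exp {a b : ℝ} (C : ℝ) (hb : 0 < b) :
    ∀ᶠ T in atTop, (T / a + 1) * C ≤ Real.exp (b * T) := by
  have hlinear : (fun T : ℝ => T) =o[atTop] fun T => Real.exp (b * T) := by
    simpa using isLittleO_pow_exp_pos_mul_atTop 1 hb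
  have hconst : (fun _ : ℝ => C) =o[atTop] fun T => Real.exp (b * T) :=
    Asymptotics.isLittleO_const_left.2 (.inr (tendsto_norm_atTop_atTop.comp
      (Real.tendsto_exp_atTop.comp (tendsto_id.const_mul_atTop hb))))
  filter_upwards [((hlinear.const_mul_left (C / a)).add hconst).bound one_pos] with T hT
  rw [one_mul, Real.norm_eq_abs, Real.norm_eq_abs, Real.abs_exp] at hT
  calc (T / a + 1) * C = C / a * T + C := by ring
    _ ≤ Real.exp (b * T) := (le_abs_self _).trans hT

lemma sum_exp_birkhoff_le_of_subset_Xset {T : ℝ} {n : ℕ} {E : Finset X} (hψB : ∀ x, ψ x ≤ B)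
    (hE : (E : Set X) ⊆ Xset f ψ T n) (c : ℝ) : ∑ x ∈ E, Real.exp (birkhoff f φ n x) ≤
      Real.exp (c * T + |c| * B) *
        ∑ x ∈ E, Real.exp (birkhoff f (fun x => φ x - c * ψ x) n x) := by
  rw [Finset.mul_sum]
  refine Finset.sum_le_sum fun x hx => ?_
  rw [← Real.exp_add]
  refine Real.exp_le_exp.2 ?_
  linarith [(abs_le.1 (abs_birkhoff_sub_mul_le_of_mem_Xset (f := f) (φ := φ) hψB (hE hx) c)).1]

theorem frequently_one_le_sum_of_lt_inducedPressure [MetricSpace X] [CompactSpace X] [Nonempty X]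
    (hφ : Continuous φ) (hm : 0 < m) (hmψ : ∀ x, m ≤ ψ x) (hψB : ∀ x, ψ x ≤ B) {c : ℝ}
    (hc : (c : EReal) < inducedPressure f φ ψ) : ∃ ε > 0, ∃ᶠ n in atTop, ∃ E : Finset X,
      IsSeparatedSet f n ε E ∧ 1 ≤ ∑ x ∈ E, Real.exp (birkhoff f (fun x => φ x - c * ψ x) n x) := by
  obtain ⟨c', hcc', hc'⟩ := EReal.lt_iff_exists_real_btwn.1 hc
  simp only [inducedPressure, lt_iSup_iff] at hc'
  obtain ⟨ε, hε, hc'⟩ := hc'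
  have hB : 0 < B := hm.trans_le ((hmψ _).trans (hψB (Classical.arbitrary X)))
  refine ⟨ε, hε, frequently_atTop.2 fun N => ?_⟩
  have hTexp := eventually_mul_add_le_exp (a := m) (Real.exp (|c| * B))
    (sub_pos.2 (EReal.coe_lt_coe_iff.1 hcc'))
  obtain ⟨T, hTQ, hTexp, hT, hTN⟩ :=
    ((frequently_lt_of_lt_limsup (by isBoundedDefault) hc').and_eventually
      (hTexp.and ((eventually_gt_atTop 0).and (eventually_ge_atTop ((N + 1) * B))))).exists
  have hS := finite_STset (f := f) (T := T) hm hmψ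
  have hne : (STset f ψ T).Nonempty :=
    (exists_mem_Xset hm hmψ hT.le (Classical.arbitrary X)).imp fun n hn => ⟨_, hn⟩
  obtain ⟨n, ⟨x, hx⟩, E, hEX, hsep, hQ⟩ := exists_isSeparatedSet_Qspan_le f φ hS hne hε
  refine ⟨n, ?_, E, hsep, ?_⟩
  · have hlt := hTN.trans_lt (lt_mul_of_mem_Xset hψB hx)
    exact_mod_cast (add_le_add_iff_right 1).1 (lt_of_mul_lt_mul_right hlt hB.le).le
  · have hQexp : Real.exp (c' * T) < Qspan f φ ψ T ε := by
      rw [← Real.lt_log_iff_exp_lt (Qspan_pos hφ hS hne hε), mul_comm]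
      rwa [EReal.coe_lt_coe_iff, ← div_eq_inv_mul, lt_div_iff₀' hT] at hTQ
    by_contra! hZ
    refine hQexp.not_ge (hQ.trans ?_)
    calc (STset f ψ T).ncard * ∑ x ∈ E, Real.exp (birkhoff f φ n x)
        ≤ (T / m + 1) * (Real.exp (c * T + |c| * B) * 1) := by
          gcongr
          · exact ncard_STset_le hm hmψ hT.le
          · exact (sum_exp_birkhoff_le_of_subset_Xset hψB hEX c).trans (by gcongr)
      _ = (T / m + 1) * Real.exp (|c| * B) * Real.exp (c * T) := by
          rw [Real.exp_add]
          ring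
      _ ≤ Real.exp ((c' - c) * T) * Real.exp (c * T) := by gcongr
      _ = Real.exp (c' * T) := by
          rw [← Real.exp_add]
          ring_nf

end PressureLower

section GibbsMeasure

variable [MeasurableSpace X] {E : Finset X} {w χ : X → ℝ}

/-- The Gibbs measure of the potential `w` on the finite set `E`, giving `x ∈ E` a mass
proportional to `exp (w x)`. -/
noncomputable def gibbsMeasure (E : Finset X) (w : X → ℝ) : Measure X :=
  ∑ x ∈ E, ENNReal.ofReal (Real.exp (w x) / ∑ y ∈ E, Real.exp (w y)) • Measure.dirac x

lemma isProbabilityMeasure_gibbsMeasure (hE : E.Nonempty) (w : X → ℝ) :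
    IsProbabilityMeasure (gibbsMeasure E w) := by
  have hZ : 0 < ∑ y ∈ E, Real.exp (w y) := Finset.sum_pos (fun _ _ => Real.exp_pos _) hE
  refine ⟨?_⟩
  simp only [gibbsMeasure, Measure.coe_finsetSum, Finset.sum_apply, Measure.smul_apply,
    measure_univ, smul_eq_mul, mul_one]
  rw [← ENNReal.ofReal_sum_of_nonneg fun _ _ => by positivity, ← Finset.sum_div, div_self hZ.ne',
    ENNReal.ofReal_one]

lemma integral_gibbsMeasure (hχ : StronglyMeasurable χ) : ∫ x, χ x ∂gibbsMeasure E w =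
    ∑ x ∈ E, Real.exp (w x) / (∑ y ∈ E, Real.exp (w y)) * χ x := by
  rw [gibbsMeasure, integral_finsetSum_measure fun x _ =>
    (integrable_dirac' hχ (by simp)).smul_measure ENNReal.ofReal_ne_top]
  refine Finset.sum_congr rfl fun x _ => ?_
  rw [integral_smul_measure, integral_dirac' _ _ hχ, ENNReal.toReal_ofReal (by positivity),
    smul_eq_mul]

lemma gibbsMeasure_real_fiber {ι : Type*} [MeasurableSpace ι] [MeasurableSingletonClass ι]
    {g : X → ι} (hg : Measurable g) (hinj : InjOn g E) {x : X} (hx : x ∈ E) :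
    (gibbsMeasure E w).real (g ⁻¹' {g x}) = Real.exp (w x) / ∑ y ∈ E, Real.exp (w y) := by
  have hs : MeasurableSet (g ⁻¹' {g x}) := hg (measurableSet_singleton _)
  rw [← integral_indicator_one hs,
    integral_gibbsMeasure (stronglyMeasurable_one.indicator hs), Finset.sum_eq_single_of_mem x hx]
  · simp
  · intro y hy hyx
    rw [indicator_of_notMem (s := g ⁻¹' {g x}) fun h => hyx (hinj hy hx h), mul_zero]

theorem labelEntropy_gibbsMeasure {ι : Type*} [Fintype ι] [MeasurableSpace ι]
    [MeasurableSingletonClass ι] (hE : E.Nonempty) (hw : StronglyMeasurable w) {g : X → ι}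
    (hg : Measurable g) (hinj : InjOn g E) :
    labelEntropy (gibbsMeasure E w) g =
      Real.log (∑ x ∈ E, Real.exp (w x)) - ∫ x, w x ∂gibbsMeasure E w := by
  have := isProbabilityMeasure_gibbsMeasure hE w
  set Z := ∑ x ∈ E, Real.exp (w x) with hZdef
  have hZ : 0 < Z := Finset.sum_pos (fun _ _ => Real.exp_pos _) hE
  have hmass : ∑ x ∈ E, Real.exp (w x) / Z = 1 := by rw [← Finset.sum_div, div_self hZ.ne']
  have hlog : StronglyMeasurable fun x => Real.log ((gibbsMeasure E w).real (g ⁻¹' {g x})) :=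
    ((measurable_of_finite fun i =>
      Real.log ((gibbsMeasure E w).real (g ⁻¹' {i}))).comp hg).stronglyMeasurable
  rw [labelEntropy_eq_integral hg, integral_gibbsMeasure hlog, integral_gibbsMeasure hw, ← hZdef,
    ← one_mul (Real.log Z), ← hmass, Finset.sum_mul, ← Finset.sum_neg_distrib,
    ← Finset.sum_sub_distrib]
  refine Finset.sum_congr rfl fun x hx => ?_
  rw [gibbsMeasure_real_fiber hg hinj hx, Real.log_div (Real.exp_pos _).ne' hZ.ne', Real.log_exp]
  ring

end GibbsMeasure

section OrbitAverage

/-- The average `n⁻¹ ∑_{i<n} (f^i)_* σ` of the first `n` push-forwards of `σ`. -/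
noncomputable def orbitAverage [MeasurableSpace X] (f : X → X) (σ : Measure X) (n : ℕ) :
    Measure X :=
  (n : ENNReal)⁻¹ • ∑ i ∈ Finset.range n, σ.map f^[i]

variable {f : X → X} {n : ℕ}

lemma isProbabilityMeasure_orbitAverage [MeasurableSpace X] (hf : Measurable f) (σ : Measure X)
    [IsProbabilityMeasure σ] (hn : n ≠ 0) : IsProbabilityMeasure (orbitAverage f σ n) := by
  have : ∀ i, IsProbabilityMeasure (σ.map f^[i]) := fun i =>
    Measure.isProbabilityMeasure_map (hf.iterate i).aemeasurable
  refine ⟨?_⟩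
  simp only [orbitAverage, Measure.smul_apply, Measure.coe_finsetSum, Finset.sum_apply,
    measure_univ, Finset.sum_const, Finset.card_range, nsmul_eq_mul, mul_one, smul_eq_mul]
  exact ENNReal.inv_mul_cancel (by exact_mod_cast hn) (ENNReal.natCast_ne_top n)

lemma integral_orbitAverage [MeasurableSpace X] (hf : Measurable f) {σ : Measure X} {χ : X → ℝ}
    (hχ : ∀ i, Integrable χ (σ.map f^[i])) :
    ∫ x, χ x ∂orbitAverage f σ n = (n : ℝ)⁻¹ * ∫ x, birkhoff f χ n x ∂σ := by
  simp only [orbitAverage, birkhoff]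
  rw [integral_smul_measure, integral_finsetSum_measure fun i _ => hχ i,
    integral_finsetSum (f := fun i x => χ (f^[i] x)) _ fun i _ => (hχ i).comp_measurable
      (hf.iterate i), ENNReal.toReal_inv, ENNReal.toReal_natCast, smul_eq_mul]
  congr 1
  exact Finset.sum_congr rfl fun i _ =>
    integral_map (hf.iterate i).aemeasurable (hχ i).aestronglyMeasurable

theorem sum_labelEntropy_comp_iterate_le [MeasurableSpace X] {ι : Type*} [Fintype ι]
    [MeasurableSpace ι] [MeasurableSingletonClass ι] (hf : Measurable f) (σ : Measure X)
    [IsFiniteMeasure σ] {g : X → ι} (hg : Measurable g) (n : ℕ) :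
    ∑ i ∈ Finset.range n, labelEntropy σ (g ∘ f^[i]) ≤
      n * labelEntropy (orbitAverage f σ n) g := by
  rcases n.eq_zero_or_pos with rfl | hn
  · simp
  have hn0 : (0 : ℝ) < n := by exact_mod_cast hn
  have hreal : ∀ s, (orbitAverage f σ n).real s =
      ∑ i ∈ Finset.range n, (n : ℝ)⁻¹ * (σ.map f^[i]).real s := fun s => by
    simp only [orbitAverage, measureReal_def, Measure.smul_apply, Measure.coe_finsetSum,
      Finset.sum_apply, smul_eq_mul, ENNReal.toReal_mul, ENNReal.toReal_inv,
      ENNReal.toReal_natCast]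
    rw [ENNReal.toReal_sum fun i _ => measure_ne_top _ _, Finset.mul_sum]
  simp only [← inv_mul_le_iff₀ hn0, fun i => (labelEntropy_map (μ := σ) (hf.iterate i) hg).symm]
  simp only [labelEntropy]
  rw [Finset.sum_comm, Finset.mul_sum]
  refine Finset.sum_le_sum fun j _ => ?_
  rw [hreal, Finset.mul_sum]
  exact Real.concaveOn_negMulLog.le_map_sum (t := Finset.range n) (w := fun _ => (n : ℝ)⁻¹)
    (p := fun i => (σ.map f^[i]).real (g ⁻¹' {j})) (fun _ _ => by positivity) (by simp [hn0.ne'])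
    fun i _ => measureReal_nonneg

theorem measurePreserving_of_tendsto_orbitAverage [MetricSpace X] [CompactSpace X]
    [MeasurableSpace X] [BorelSpace X] (hf : Continuous f) {ι : Type*} {L : Filter ι} [L.NeBot]
    {ns : ι → ℕ} (hns : Tendsto ns L atTop) {σs : ι → Measure X}
    (hσs : ∀ t, IsProbabilityMeasure (σs t)) {μs : ι → ProbabilityMeasure X}
    (hμσ : ∀ t, (μs t : Measure X) = orbitAverage f (σs t) (ns t)) {μ : ProbabilityMeasure X}
    (hμs : Tendsto μs L (𝓝 μ)) : MeasurePreserving f (μ : Measure X) (μ : Measure X) := by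
  have := Measure.isProbabilityMeasure_map hf.measurable.aemeasurable (μ := (μ : Measure X))
  refine ⟨hf.measurable, ext_of_forall_integral_eq_of_IsFiniteMeasure fun χ => ?_⟩
  rw [integral_map hf.measurable.aemeasurable χ.continuous.aestronglyMeasurable, ← sub_eq_zero,
    ← integral_sub (f := fun x => χ (f x)) (integrable_of_continuous (χ.continuous.comp hf) _)
      (integrable_of_continuous χ.continuous _)]
  have hχf : Continuous fun x => χ (f x) - χ x := (χ.continuous.comp hf).sub χ.continuous
  refine tendsto_nhds_unique (tendsto_integral_of_tendsto hμs hχf) ?_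
  have hsum : ∀ n x, birkhoff f (fun x => χ (f x) - χ x) n x = χ (f^[n] x) - χ x := fun n x => by
    simp only [birkhoff, ← Function.iterate_succ_apply' f]
    exact Finset.sum_range_sub (fun i => χ (f^[i] x)) n
  have hbound : ∀ t, ‖∫ x, (χ (f x) - χ x) ∂(μs t : Measure X)‖ ≤
      (ns t : ℝ)⁻¹ * (‖χ‖ + ‖χ‖) := fun t => by
    have : ∀ i, IsProbabilityMeasure ((σs t).map f^[i]) := fun i =>
      Measure.isProbabilityMeasure_map (hf.iterate i).measurable.aemeasurable
    rw [hμσ, integral_orbitAverage hf.measurable fun i => integrable_of_continuous hχf _,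
      norm_mul, Real.norm_of_nonneg (by positivity)]
    refine mul_le_mul_of_nonneg_left ?_ (by positivity)
    refine (norm_integral_le_of_norm_le_const (C := ‖χ‖ + ‖χ‖) (ae_of_all _ fun x => ?_)).trans
      (by simp)
    rw [hsum]
    exact (norm_sub_le _ _).trans (add_le_add (χ.norm_coe_le_norm _) (χ.norm_coe_le_norm _))
  refine squeeze_zero_norm hbound ?_
  simpa using (tendsto_inv_atTop_zero.comp (tendsto_natCast_atTop_atTop.comp hns)).mul_const
    (‖χ‖ + ‖χ‖)

end OrbitAverage

lemma IsSeparatedSet.injOn_itinerary [MetricSpace X] {f : X → X} {ε : ℝ} {n : ℕ}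
    {E : Finset X} (hE : IsSeparatedSet f n ε E) (hε : 0 ≤ ε) {ι : Type*} {q : X → ι}
    (hqε : ∀ x y, q x = q y → dist x y ≤ ε) :
    InjOn (itinerary f q n) E := fun x hx y hy hxy => by
  by_contra hne
  exact (hE x hx y hy hne).not_ge
    ((dynDist_le_iff hε).2 fun i hi => hqε _ _ (itinerary_eq_iff.1 hxy i hi))

section Misiurewicz

variable [MetricSpace X] [CompactSpace X] [MeasurableSpace X] [BorelSpace X] {f : X → X}
  {χ : X → ℝ} {ε : ℝ}

lemma IsSeparatedSet.mul_log_sum_sub_le {n : ℕ} {E : Finset X} (hE : IsSeparatedSet f n ε E)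
    (hε : 0 ≤ ε) (hne : E.Nonempty) (hn : n ≠ 0) (hf : Continuous f) (hχ : Continuous χ) {k : ℕ}
    {q : X → Fin k} (hq : Measurable q) (hqε : ∀ x y, q x = q y → dist x y ≤ ε) {μ : Measure X}
    (hμ : μ = orbitAverage f (gibbsMeasure E (birkhoff f χ n)) n) (m : ℕ) :
    m * (Real.log (∑ x ∈ E, Real.exp (birkhoff f χ n x)) - n * ∫ x, χ x ∂μ) ≤
      n * labelEntropy μ (itinerary f q m) + 2 * m ^ 2 * Real.log k := by
  have hσ := isProbabilityMeasure_gibbsMeasure hne (birkhoff f χ n)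
  have hgibbs := labelEntropy_gibbsMeasure hne (continuous_birkhoff hf hχ n).stronglyMeasurable
    (measurable_itinerary hf.measurable hq n) (hE.injOn_itinerary hε hqε)
  have haverage := sum_labelEntropy_comp_iterate_le hf.measurable
    (gibbsMeasure E (birkhoff f χ n)) (measurable_itinerary hf.measurable hq m) n
  have hintegral : n * ∫ x, χ x ∂μ =
      ∫ x, birkhoff f χ n x ∂gibbsMeasure E (birkhoff f χ n) := by
    have : ∀ i, IsProbabilityMeasure ((gibbsMeasure E (birkhoff f χ n)).map f^[i]) :=
      fun i => Measure.isProbabilityMeasure_map (hf.iterate i).measurable.aemeasurable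
    rw [hμ, integral_orbitAverage hf.measurable fun i => integrable_of_continuous hχ _,
      mul_inv_cancel_left₀ (by exact_mod_cast hn)]
  rw [hintegral, ← hgibbs]
  refine (mul_labelEntropy_itinerary_le hf.measurable hq m n).trans ?_
  rw [Fintype.card_fin, hμ]
  gcongr

lemma neg_integral_le_ksEntropy_of_tendsto (hf : Continuous f) (hχ : Continuous χ) {ι : Type*}
    {L : Filter ι} [L.NeBot] {μs : ι → ProbabilityMeasure X} {μ : ProbabilityMeasure X}
    (hμs : Tendsto μs L (𝓝 μ)) (hμ : MeasurePreserving f (μ : Measure X) μ) {ns : ι → ℕ}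
    (hns : Tendsto ns L atTop) {k : ℕ} {q : X → Fin k} (hq : Measurable q)
    (hqμ : ∀ i, (μ : Measure X) (frontier (q ⁻¹' {i})) = 0) {C : ℕ → ℝ}
    (h : ∀ m t, m * -(ns t * ∫ x, χ x ∂(μs t : Measure X)) ≤
      ns t * labelEntropy (μs t : Measure X) (itinerary f q m) + C m) :
    ((-∫ x, χ x ∂(μ : Measure X) : ℝ) : EReal) ≤ ksEntropy (μ : Measure X) f := by
  refine (le_labelEntropyRate fun m => ?_).trans (labelEntropyRate_le_ksEntropy hq)
  have herror : Tendsto (fun t => (ns t : ℝ)⁻¹ * C m) L (𝓝 0) := by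
    simpa using (tendsto_inv_atTop_zero.comp (tendsto_natCast_atTop_atTop.comp hns)).mul_const (C m)
  have hlimit := (tendsto_labelEntropy_itinerary hμs hf hμ hqμ m).add herror
  rw [add_zero] at hlimit
  refine le_of_tendsto_of_tendsto ((tendsto_integral_of_tendsto hμs hχ).neg.const_mul (m : ℝ))
    hlimit ?_
  filter_upwards [hns.eventually_gt_atTop 0] with t ht
  have ht0 : (0 : ℝ) < ns t := by exact_mod_cast ht
  refine le_of_mul_le_mul_left ?_ ht0
  rw [mul_add, mul_inv_cancel_left₀ ht0.ne']
  linarith [h m t]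

/-- Misiurewicz's construction: a large separated set carries a Gibbs measure of large entropy, and
the limits of its orbit averages are invariant and inherit the entropy bound. -/
theorem exists_mem_invariantMeasures_freeEnergy_nonneg (hf : Continuous f) (hχ : Continuous χ)
    (hε : 0 < ε) (h : ∃ᶠ n in atTop, ∃ E : Finset X, IsSeparatedSet f n ε E ∧
      1 ≤ ∑ x ∈ E, Real.exp (birkhoff f χ n x)) :
    ∃ μ ∈ invariantMeasures f, 0 ≤ freeEnergy f χ (μ : Measure X) := by
  obtain ⟨ns, hns, hns'⟩ :=
    extraction_of_frequently_atTop (h.and_eventually (eventually_ne_atTop 0))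
  choose hE hns0 using hns'
  choose E hE hsum using hE
  have hne : ∀ t, (E t).Nonempty := fun t =>
    Finset.nonempty_of_sum_ne_zero (zero_lt_one.trans_le (hsum t)).ne'
  set σs : ℕ → Measure X := fun t => gibbsMeasure (E t) (birkhoff f χ (ns t))
  have hσs : ∀ t, IsProbabilityMeasure (σs t) := fun t =>
    isProbabilityMeasure_gibbsMeasure (hne t) _
  set μs : ℕ → ProbabilityMeasure X := fun t => ⟨orbitAverage f (σs t) (ns t),
    isProbabilityMeasure_orbitAverage hf.measurable (σs t) (hns0 t)⟩
  obtain ⟨μ, s, hs, hμs⟩ := CompactSpace.tendsto_subseq μs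
  have hnss : Tendsto (ns ∘ s) atTop atTop := (hns.comp hs).tendsto_atTop
  have hμ : MeasurePreserving f (μ : Measure X) (μ : Measure X) :=
    measurePreserving_of_tendsto_orbitAverage hf hnss (fun t => hσs (s t)) (fun _ => rfl) hμs
  obtain ⟨k, q, hq, hqε, hqμ⟩ := exists_label_measure_frontier_eq_zero (μ : Measure X) hε
  have hle := neg_integral_le_ksEntropy_of_tendsto hf hχ hμs hμ hnss hq hqμ
    (C := fun m => 2 * m ^ 2 * Real.log k) fun m t => by
      refine le_trans ?_ ((hE (s t)).mul_log_sum_sub_le hε.le (hne _) (hns0 _) hf hχ hq hqε rfl m)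
      rw [← zero_sub]
      exact mul_le_mul_of_nonneg_left (sub_le_sub_right (Real.log_nonneg (hsum _)) _) m.cast_nonneg
  refine ⟨μ, hμ, ?_⟩
  calc (0 : EReal) = ((-∫ x, χ x ∂(μ : Measure X) : ℝ) : EReal) +
        ((∫ x, χ x ∂(μ : Measure X) : ℝ) : EReal) := by rw [← EReal.coe_add]; simp
    _ ≤ freeEnergy f χ (μ : Measure X) := by
      rw [freeEnergy]
      gcongr

lemma nonempty_invariantMeasures [Nonempty X] (hf : Continuous f) :
    (invariantMeasures f).Nonempty := by
  obtain ⟨x⟩ := ‹Nonempty X›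
  obtain ⟨μ, hμ, -⟩ := exists_mem_invariantMeasures_freeEnergy_nonneg hf (χ := 0) continuous_zero
    zero_lt_one (Frequently.of_forall fun n => ⟨{x}, by simp [IsSeparatedSet], by simp [birkhoff]⟩)
  exact ⟨μ, hμ⟩

end Misiurewicz

section OrbitCodes

universe v

/-- A finite variable-length code for the orbits of `f`. Each label announces the length of the
orbit segment which it determines up to `δ`; the logarithm of its weight dominates the Birkhoff sum
of `χ` over that segment, and the Kraft inequality `∑ weight ≤ 1` holds, so that `-log weight` is
the length of a code word. Blocks can be concatenated without losing the Kraft inequality. -/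
structure OrbitCode [MetricSpace X] [MeasurableSpace X] (f : X → X) (χ : X → ℝ) (δ : ℝ) where
  Label : Type v
  [fintype : Fintype Label]
  label : X → Label
  measurable_label : Measurable[_, ⊤] label
  length : Label → ℕ
  weight : Label → ℝ
  weight_pos : ∀ i, 0 < weight i
  sum_weight_le_one : ∑ i, weight i ≤ 1
  dist_lt : ∀ x y, label x = label y → ∀ i < length (label x), dist (f^[i] x) (f^[i] y) < δ
  birkhoff_le : ∀ x, birkhoff f χ (length (label x)) x ≤ Real.log (weight (label x))

attribute [instance] OrbitCode.fintype

namespace OrbitCode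

variable [MetricSpace X] [MeasurableSpace X] {f : X → X} {χ : X → ℝ} {δ : ℝ}

/-- The code whose only word has length zero. -/
def nil (f : X → X) (χ : X → ℝ) (δ : ℝ) : OrbitCode.{v} f χ δ where
  Label := PUnit
  label _ := PUnit.unit
  measurable_label := measurable_const
  length _ := 0
  weight _ := 1
  weight_pos _ := one_pos
  sum_weight_le_one := by simp
  dist_lt _ _ _ _ hi := absurd hi (Nat.not_lt_zero _)
  birkhoff_le := by simp [birkhoff]

/-- Concatenation: after a block with label `i` of `C`, the orbit is encoded by `D i`. -/
def bind (hf : Measurable f) (C : OrbitCode.{v} f χ δ) (D : C.Label → OrbitCode.{v} f χ δ) :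
    OrbitCode.{v} f χ δ where
  Label := Σ i, (D i).Label
  label x := ⟨C.label x, (D (C.label x)).label (f^[C.length (C.label x)] x)⟩
  measurable_label := by
    let : MeasurableSpace C.Label := ⊤
    let : MeasurableSpace (Σ i, (D i).Label) := ⊤
    refine Measurable.comp (g := fun p : C.Label × X =>
        (⟨p.1, (D p.1).label (f^[C.length p.1] p.2)⟩ : Σ i, (D i).Label))
      (measurable_from_prod_countable_right fun i => ?_) (C.measurable_label.prodMk measurable_id)
    exact (measurable_from_top (f := Sigma.mk i)).comp
      ((D i).measurable_label.comp (hf.iterate (C.length i)))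
  length p := C.length p.1 + (D p.1).length p.2
  weight p := C.weight p.1 * (D p.1).weight p.2
  weight_pos p := mul_pos (C.weight_pos _) ((D p.1).weight_pos _)
  sum_weight_le_one := by
    rw [Fintype.sum_sigma]
    refine (Finset.sum_le_sum fun i _ => ?_).trans C.sum_weight_le_one
    simp only [← Finset.mul_sum]
    exact mul_le_of_le_one_right (C.weight_pos i).le (D i).sum_weight_le_one
  dist_lt x y hxy k hk := by
    obtain ⟨hC, hD⟩ := Sigma.mk.inj_iff.1 hxy
    rw [← hC] at hD
    rcases lt_or_ge k (C.length (C.label x)) with hkC | hCk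
    · exact C.dist_lt x y hC k hkC
    · obtain ⟨j, rfl⟩ := exists_add_of_le hCk
      have hj := (D _).dist_lt _ _ (eq_of_heq hD) j (add_lt_add_iff_left _ |>.1 hk)
      simpa only [← Function.iterate_add_apply, add_comm j] using hj
  birkhoff_le x := by
    rw [birkhoff_add, Real.log_mul (C.weight_pos _).ne' ((D _).weight_pos _).ne']
    exact add_le_add (C.birkhoff_le x) ((D _).birkhoff_le _)

lemma length_label_bind (hf : Measurable f) (C : OrbitCode.{v} f χ δ)
    (D : C.Label → OrbitCode.{v} f χ δ) (x : X) : (C.bind hf D).length ((C.bind hf D).label x) =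
      C.length (C.label x) +
        (D (C.label x)).length ((D (C.label x)).label (f^[C.length (C.label x)] x)) := rfl

lemma exists_length_mem_Icc (hf : Measurable f) (C : OrbitCode.{v} f χ δ)
    (hC : ∀ x, 0 < C.length (C.label x)) : ∃ M, ∀ N, ∃ D : OrbitCode.{v} f χ δ,
      ∀ x, D.length (D.label x) ∈ Icc N (N + M) := by
  refine ⟨Finset.univ.sup C.length, fun N => ?_⟩
  induction N with
  | zero => exact ⟨nil f χ δ, fun x => ⟨le_rfl, Nat.zero_le _⟩⟩
  | succ N ih =>
    obtain ⟨D, hD⟩ := ih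
    refine ⟨D.bind hf fun i => if N + 1 ≤ D.length i then nil f χ δ else C, fun x => ?_⟩
    obtain ⟨hND, hDN⟩ := hD x
    rw [length_label_bind, mem_Icc]
    by_cases hN : N + 1 ≤ D.length (D.label x)
    · rw [if_pos hN]
      simp only [nil]
      lia
    · rw [if_neg hN]
      have hpos := hC (f^[D.length (D.label x)] x)
      have hle := Finset.le_sup (f := C.length)
        (Finset.mem_univ (C.label (f^[D.length (D.label x)] x)))
      lia

lemma labelEntropy_label_le {μ : Measure X} [IsProbabilityMeasure μ]
    (hμ : MeasurePreserving f μ μ) (hχ : Integrable χ μ) {B : ℝ} (hB : 0 ≤ B)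
    (hBχ : ∀ x, -B ≤ χ x) {M N : ℕ} (D : OrbitCode.{v} f χ δ)
    (hD : ∀ x, D.length (D.label x) ∈ Icc N (N + M)) :
    labelEntropy μ D.label ≤ N * -∫ x, χ x ∂μ + M * B := by
  let : MeasurableSpace D.Label := ⊤
  have hbirkhoff : ∀ x, birkhoff f χ N x - M * B ≤ Real.log (D.weight (D.label x)) := by
    intro x
    obtain ⟨k, hk⟩ := exists_add_of_le (hD x).1
    have hkM : (k : ℝ) ≤ M := by exact_mod_cast add_le_add_iff_left N |>.1 (hk ▸ (hD x).2)
    have hlog := D.birkhoff_le x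
    rw [hk, birkhoff_add] at hlog
    have htail := le_birkhoff (f := f) (n := k) (x := f^[N] x) hBχ
    nlinarith
  have hint : Integrable (birkhoff f χ N) μ :=
    integrable_finsetSum _ fun i _ => (hμ.iterate i).integrable_comp_of_integrable hχ
  have hgibbs := labelEntropy_le_neg_integral_log (μ := μ) D.measurable_label
    (fun i => (D.weight_pos i).le) (fun i _ => D.weight_pos i) D.sum_weight_le_one
  have hmono := integral_mono (hint.sub (integrable_const (M * B)))
    (integrable_comp_label D.measurable_label fun i => Real.log (D.weight i)) hbirkhoff
  simp only [Pi.sub_apply] at hmono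
  rw [integral_sub hint (integrable_const _), integral_birkhoff hμ hχ, integral_const,
    probReal_univ, one_smul] at hmono
  linarith

end OrbitCode

theorem freeEnergy_nonpos_of_exists_orbitCode [MetricSpace X] [CompactSpace X] [MeasurableSpace X]
    [BorelSpace X] {f : X → X} {χ : X → ℝ} (hχ : Continuous χ) {μ : Measure X}
    [IsProbabilityMeasure μ] (hμ : MeasurePreserving f μ μ)
    (h : ∀ δ > 0, ∃ C : OrbitCode.{v} f χ δ, ∀ x, 0 < C.length (C.label x)) :
    freeEnergy f χ μ ≤ 0 := by
  obtain ⟨B, hB⟩ := isCompact_univ.exists_bound_of_continuousOn hχ.continuousOn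
  have hBχ : ∀ x, -|B| ≤ χ x := fun x => (abs_le.1 ((hB x trivial).trans (le_abs_self B))).1
  have hle : ksEntropy μ f ≤ (-∫ x, χ x ∂μ : ℝ) := by
    refine ksEntropy_le_of_exists_label hμ fun δ hδ => ?_
    obtain ⟨C, hC⟩ := h δ hδ
    obtain ⟨M, hM⟩ := C.exists_length_mem_Icc hμ.measurable hC
    refine ⟨M * |B|, fun N => ?_⟩
    obtain ⟨D, hD⟩ := hM N
    let : MeasurableSpace D.Label := ⊤
    exact ⟨D.Label, inferInstance, inferInstance, inferInstance, D.label, D.measurable_label,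
      fun x y hxy i hi => D.dist_lt x y hxy i (hi.trans_le (hD x).1),
      D.labelEntropy_label_le hμ (integrable_of_continuous hχ μ) (abs_nonneg B) hBχ hD⟩
  calc freeEnergy f χ μ ≤ (-∫ x, χ x ∂μ : ℝ) + (∫ x, χ x ∂μ : ℝ) := by
        unfold freeEnergy
        gcongr
    _ = 0 := by rw [← EReal.coe_add, neg_add_cancel, EReal.coe_zero]

end OrbitCodes

section PressureUpper

universe u

lemma exists_measurable_forall_mem [MeasurableSpace X] {ι : Type*} [Finite ι] {A : ι → Set X}
    (hA : ∀ i, MeasurableSet (A i)) (hcover : ∀ x, ∃ i, x ∈ A i) :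
    ∃ a : X → ι, Measurable[_, ⊤] a ∧ ∀ x, x ∈ A (a x) := by
  rcases isEmpty_or_nonempty ι with hι | hι
  · have : IsEmpty X := ⟨fun x => isEmptyElim (hcover x).choose⟩
    exact ⟨isEmptyElim, @measurable_of_empty _ _ _ ⊤ _ _, isEmptyElim⟩
  · let : MeasurableSpace ι := ⊤
    exact ⟨fun x => Classical.epsilon fun i => x ∈ A i,
      (measurable_of_finite fun s : Set ι => Classical.epsilon fun i => i ∈ s).comp
        (measurable_setOf_mem hA), fun x => Classical.epsilon_spec (hcover x)⟩

lemma continuous_dynDist [MetricSpace X] {f : X → X} (hf : Continuous f) (n : ℕ) (x : X) :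
    Continuous (dynDist f n x) := by
  simp_rw [funext fun y => dynDist_eq_dist_pi f n x y]
  exact continuous_const.dist (continuous_pi fun i => hf.iterate i)

lemma measurableSet_Xset [TopologicalSpace X] [MeasurableSpace X] [OpensMeasurableSpace X]
    {f : X → X} (hf : Continuous f) {ψ : X → ℝ} (hψ : Continuous ψ) (T : ℝ) (n : ℕ) :
    MeasurableSet (Xset f ψ T n) :=
  (measurableSet_le (continuous_birkhoff hf hψ n).measurable measurable_const).inter
    (measurableSet_lt measurable_const (continuous_birkhoff hf hψ (n + 1)).measurable)

lemma le_div_of_mem_STset {f : X → X} {ψ : X → ℝ} {m T : ℝ} {n : ℕ} (hm : 0 < m)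
    (hmψ : ∀ x, m ≤ ψ x) (hT : 0 ≤ T) (hn : n ∈ STset f ψ T) : (n : ℝ) ≤ T / m :=
  (Nat.cast_le.2 (Finset.mem_Iic.1 (STset_subset_Iic hm hmψ hn))).trans
    (Nat.floor_le (by positivity))

lemma exists_orbitCode_of_isSpanningSet {X : Type u} [MetricSpace X] [MeasurableSpace X]
    [BorelSpace X] {f : X → X} (hf : Continuous f) {φ ψ : X → ℝ} (hψ : Continuous ψ)
    {m B T ε δ o β : ℝ} (hm : 0 < m) (hmψ : ∀ x, m ≤ ψ x) (hψB : ∀ x, ψ x ≤ B) (hT : 0 ≤ T)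
    (hBT : B ≤ T) (hε : 0 ≤ ε) (hεδ : 2 * ε < δ) (ho0 : 0 ≤ o)
    (ho : ∀ x y, dist x y ≤ ε → φ x ≤ φ y + o) (hS : (STset f ψ T).Finite) {F : ℕ → Finset X}
    (hF : ∀ n ∈ STset f ψ T, IsSpanningSet f n ε (Xset f ψ T n) (F n))
    (hsum : ∑ n ∈ hS.toFinset, ∑ x ∈ F n, Real.exp (birkhoff f φ n x) ≤
      Real.exp (β * T - |β| * B - T / m * o)) :
    ∃ C : OrbitCode.{u} f (fun x => φ x - β * ψ x) δ, ∀ x, 0 < C.length (C.label x) := by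
  let ι := hS.toFinset.sigma F
  obtain ⟨a, ha, hmem⟩ := exists_measurable_forall_mem
    (A := fun p : ι => Xset f ψ T p.1.1 ∩ {y | dynDist f p.1.1 p.1.2 y ≤ ε})
    (fun p => (measurableSet_Xset hf hψ T _).inter
      (measurableSet_le (continuous_dynDist hf _ _).measurable measurable_const))
    (fun y => by
      obtain ⟨n, hn⟩ := exists_mem_Xset hm hmψ hT y
      have hnS : n ∈ STset f ψ T := ⟨y, hn⟩
      obtain ⟨z, hz, hzy⟩ := hF n hnS y hn
      exact ⟨⟨⟨n, z⟩, Finset.mem_sigma.2 ⟨hS.mem_toFinset.2 hnS, hz⟩⟩, hn, hzy⟩)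
  have hdist : ∀ y, ∀ i < (a y).1.1, dist (f^[i] (a y).1.2) (f^[i] y) ≤ ε := fun y =>
    (dynDist_le_iff hε).1 (hmem y).2
  refine ⟨{
    Label := ι
    label := a
    measurable_label := ha
    length := fun p => p.1.1
    weight := fun p =>
      Real.exp (birkhoff f φ p.1.1 p.1.2) * Real.exp (-(β * T - |β| * B - T / m * o))
    weight_pos := fun p => by positivity
    sum_weight_le_one := ?_
    dist_lt := fun x y hxy i hi => ?_
    birkhoff_le := fun y => ?_ }, fun y => Nat.pos_of_ne_zero fun h0 : (a y).1.1 = 0 => ?_⟩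
  · rw [← Finset.sum_mul, Finset.sum_coe_sort ι fun p => Real.exp (birkhoff f φ p.1 p.2),
      Finset.sum_sigma, Real.exp_neg]
    exact mul_inv_le_one_of_le₀ hsum (Real.exp_pos _).le
  · have htri := dist_triangle_left (f^[i] x) (f^[i] y) (f^[i] (a x).1.2)
    have hy := hdist y
    rw [← hxy] at hy
    linarith [hdist x i hi, hy i hi]
  · rw [← Real.exp_add, Real.log_exp]
    have hφ := birkhoff_le_add_of_forall_dist_le ho fun i hi =>
      (dist_comm _ _).trans_le (hdist y i hi)
    have hφψ := (abs_le.1 (abs_birkhoff_sub_mul_le_of_mem_Xset (φ := φ) hψB (hmem y).1 β)).2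
    have hlength := mul_le_mul_of_nonneg_right (le_div_of_mem_STset hm hmψ hT ⟨y, (hmem y).1⟩) ho0
    linarith
  · have hTB := lt_mul_of_mem_Xset hψB (hmem y).1
    rw [h0, Nat.cast_zero] at hTB
    linarith

theorem exists_orbitCode_of_inducedPressure_lt {X : Type u} [MetricSpace X] [CompactSpace X]
    [MeasurableSpace X] [BorelSpace X] {f : X → X} (hf : Continuous f) {φ ψ : X → ℝ}
    (hφ : Continuous φ) (hψ : Continuous ψ) {m B : ℝ} (hm : 0 < m) (hmψ : ∀ x, m ≤ ψ x)
    (hψB : ∀ x, ψ x ≤ B) {β : ℝ} (hβ : inducedPressure f φ ψ < β) {δ : ℝ} (hδ : 0 < δ) :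
    ∃ C : OrbitCode.{u} f (fun x => φ x - β * ψ x) δ, ∀ x, 0 < C.length (C.label x) := by
  obtain ⟨β', hPβ', hβ'β⟩ := EReal.lt_iff_exists_real_btwn.1 hβ
  have hgap : 0 < β - β' := sub_pos.2 (EReal.coe_lt_coe_iff.1 hβ'β)
  set o := (β - β') * m / 2
  obtain ⟨η, hη, ho⟩ := Metric.uniformContinuous_iff.1
    (CompactSpace.uniformContinuous_of_continuous hφ) o (by positivity)
  set ε := min (η / 2) (δ / 3)
  have hε : 0 < ε := by positivity
  have hlimsup :
      limsup (fun T : ℝ => ((T⁻¹ * Real.log (Qspan f φ ψ T ε) : ℝ) : EReal)) atTop < β' :=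
    (le_iSup₂_of_le ε hε le_rfl).trans_lt hPβ'
  obtain ⟨T, hTQ, hT, hBT, hTβ⟩ := ((eventually_lt_of_limsup_lt hlimsup).and
    ((eventually_gt_atTop 0).and ((eventually_ge_atTop B).and
      (eventually_ge_atTop (|β| * B / ((β - β') / 2)))))).exists
  have hQ : Qspan f φ ψ T ε < Real.exp (β' * T) := Real.lt_exp_of_log_lt <| by
    rwa [EReal.coe_lt_coe_iff, inv_mul_lt_iff₀ hT, mul_comm] at hTQ
  have hS := finite_STset (f := f) (T := T) hm hmψ
  obtain ⟨F, hF, hsum⟩ := exists_isSpanningSet_of_Qspan_lt hS hε hQ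
  refine exists_orbitCode_of_isSpanningSet hf hψ hm hmψ hψB hT.le hBT hε.le (δ := δ) ?_
    (o := o) (by positivity) (fun x y hxy => ?_) hS hF (hsum.le.trans (Real.exp_le_exp.2 ?_))
  · linarith [min_le_right (η / 2) (δ / 3)]
  · have hxyη : dist x y < η := by linarith [min_le_left (η / 2) (δ / 3)]
    linarith [(abs_lt.1 (ho hxyη)).2]
  · rw [div_le_iff₀ (by positivity)] at hTβ
    have hTo : T / m * o = T * ((β - β') / 2) := by
      simp only [o]
      field_simp
    linarith

end PressureUpper

section VariationalPrinciple

lemma exists_pos_forall_mem_Icc [TopologicalSpace X] [CompactSpace X] [Nonempty X] {ψ : X → ℝ}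
    (hψ : Continuous ψ) (hpos : ∀ x, 0 < ψ x) : ∃ m B, 0 < m ∧ ∀ x, ψ x ∈ Icc m B := by
  obtain ⟨x, -, hx⟩ := isCompact_univ.exists_isMinOn univ_nonempty hψ.continuousOn
  obtain ⟨y, -, hy⟩ := isCompact_univ.exists_isMaxOn univ_nonempty hψ.continuousOn
  exact ⟨ψ x, ψ y, hpos x, fun z => ⟨hx (mem_univ z), hy (mem_univ z)⟩⟩

variable [MetricSpace X] [CompactSpace X] [Nonempty X] [MeasurableSpace X] [BorelSpace X]
  {f : X → X} {φ ψ : X → ℝ}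

theorem inducedFreeEnergy_le_inducedPressure (hf : Continuous f) (hφ : Continuous φ)
    (hψ : Continuous ψ) (hpos : ∀ x, 0 < ψ x) {μ : ProbabilityMeasure X}
    (hμ : μ ∈ invariantMeasures f) :
    inducedFreeEnergy f φ ψ (μ : Measure X) ≤ inducedPressure f φ ψ := by
  obtain ⟨m, B, hm, hmB⟩ := exists_pos_forall_mem_Icc hψ hpos
  refine EReal.le_of_forall_lt_iff_le.1 fun β hβ => ?_
  rw [inducedFreeEnergy_le_iff (integrable_of_continuous hφ _) (integrable_of_continuous hψ _)
    (integral_pos_of_continuous hψ hpos _)]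
  exact freeEnergy_nonpos_of_exists_orbitCode (hφ.sub (hψ.const_mul β)) hμ fun δ hδ =>
    exists_orbitCode_of_inducedPressure_lt hf hφ hψ hm (fun x => (hmB x).1) (fun x => (hmB x).2)
      hβ hδ

theorem exists_le_inducedFreeEnergy_of_lt_inducedPressure (hf : Continuous f) (hφ : Continuous φ)
    (hψ : Continuous ψ) (hpos : ∀ x, 0 < ψ x) {c : ℝ} (hc : c < inducedPressure f φ ψ) :
    ∃ μ ∈ invariantMeasures f, c ≤ inducedFreeEnergy f φ ψ (μ : Measure X) := by
  obtain ⟨m, B, hm, hmB⟩ := exists_pos_forall_mem_Icc hψ hpos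
  obtain ⟨ε, hε, hfreq⟩ := frequently_one_le_sum_of_lt_inducedPressure hφ hm
    (fun x => (hmB x).1) (fun x => (hmB x).2) hc
  obtain ⟨μ, hμ, hμ0⟩ := exists_mem_invariantMeasures_freeEnergy_nonneg hf
    (hφ.sub (hψ.const_mul c)) hε hfreq
  refine ⟨μ, hμ, le_of_not_gt fun hlt => hμ0.not_gt ?_⟩
  exact (inducedFreeEnergy_lt_iff (integrable_of_continuous hφ _) (integrable_of_continuous hψ _)
    (integral_pos_of_continuous hψ hpos _)).1 hlt

theorem inducedPressure_eq_iSup (hf : Continuous f) (hφ : Continuous φ) (hψ : Continuous ψ)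
    (hpos : ∀ x, 0 < ψ x) : inducedPressure f φ ψ =
      ⨆ μ ∈ invariantMeasures f, inducedFreeEnergy f φ ψ (μ : Measure X) := by
  refine le_antisymm (EReal.ge_of_forall_gt_iff_ge.1 fun c hc => ?_)
    (iSup₂_le fun μ hμ => inducedFreeEnergy_le_inducedPressure hf hφ hψ hpos hμ)
  obtain ⟨μ, hμ, hcμ⟩ := exists_le_inducedFreeEnergy_of_lt_inducedPressure hf hφ hψ hpos hc
  exact hcμ.trans (le_iSup₂_of_le μ hμ le_rfl)

end VariationalPrinciple

theorem stmt14_general [MetricSpace X] [CompactSpace X] [Nonempty X]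
    [MeasurableSpace X] [BorelSpace X]
    (f : X → X) (φ ψ : X → ℝ) (hf : Continuous f) (hφ : Continuous φ) (hψ : Continuous ψ)
    (hpos : ∀ x, 0 < ψ x)
    (husc : UpperSemicontinuousOn (fun μ : ProbabilityMeasure X => ksEntropy (μ : Measure X) f)
      (invariantMeasures f)) :
    letI S : Set (ProbabilityMeasure X) :=
      {μ | MeasurePreserving f (μ : Measure X) (μ : Measure X) ∧
        IsEquilibriumMeasure f φ ψ (μ : Measure X)}
    S.Nonempty ∧ IsCompact S := by
  have hF := upperSemicontinuousOn_inducedFreeEnergy husc hφ hψ hpos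
  have hK : IsCompact (invariantMeasures f) := (isClosed_invariantMeasures hf).isCompact
  constructor
  · obtain ⟨μ, hμ, hmax⟩ := hF.exists_isMaxOn (nonempty_invariantMeasures hf) hK
    refine ⟨μ, hμ, (inducedFreeEnergy_le_inducedPressure hf hφ hψ hpos hμ).antisymm ?_⟩
    rw [inducedPressure_eq_iSup hf hφ hψ hpos]
    exact iSup₂_le hmax
  · convert hF.isCompact_inter_preimage_Ici hK (inducedPressure f φ ψ) using 1
    ext μ
    exact and_congr_right fun hμ =>
      ⟨ge_of_eq, (inducedFreeEnergy_le_inducedPressure hf hφ hψ hpos hμ).antisymm⟩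

/-- for a positively expansive map, the set of equilibrium measures for
`ψ` and `φ` is non-empty and compact in the weak-* topology. -/
theorem stmt14 [MetricSpace X] [CompactSpace X] [Nonempty X]
    [MeasurableSpace X] [BorelSpace X]
    (f : X → X) (φ ψ : X → ℝ) (hf : Continuous f) (hφ : Continuous φ) (hψ : Continuous ψ)
    (hpos : ∀ x, 0 < ψ x)
    (hexp : ∃ ε : ℝ, 0 < ε ∧ ∀ x y : X,
      (∀ n : ℕ, dist (f^[n] x) (f^[n] y) < ε) → x = y) :
    letI S : Set (ProbabilityMeasure X) :=
      {μ | MeasurePreserving f (μ : Measure X) (μ : Measure X) ∧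
        IsEquilibriumMeasure f φ ψ (μ : Measure X)}
    S.Nonempty ∧ IsCompact S := by
  obtain ⟨ε, hε, hexp⟩ := hexp
  exact stmt14_general f φ ψ hf hφ hψ hpos
    (IsExpansivityConstant.upperSemicontinuousOn_ksEntropy hexp hε hf)
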